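/- arXiv:1410.7727 — 2 statements merged into one kernel-verified Lean document; each statement's English description precedes it below -/
import Mathlib

section
/- For every w ∈ Max and every α ∈ Δ', one has α ∈ DF(w) if and only if I(α) ≤ w in the lexicographic order. -/
open Filter Topology MeasureTheory

/-- The sequence space `Σ⁺ = {0,1,2}^ℕ` (with the product topology). -/
abbrev Seq3 := ℕ → Fin 3

/-- The shift map `σ`. -/
def shift (s : Seq3) : Seq3 := fun n => s (n + 1)

/-- The observable `κ(s) = e_{s₀}`. -/
noncomputable def kappa (s : Seq3) : Fin 3 → ℝ := fun i => if i = s 0 then 1 else 0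

/-- The cocycle `κ_σ(s,r) = Σ_{i<r} κ(σⁱ s)`. -/
noncomputable def birk (s : Seq3) (r : ℕ) : Fin 3 → ℝ :=
  ∑ i ∈ Finset.range r, kappa (shift^[i] s)

/-- The Birkhoff digit frequency of `s` exists and equals `v`. -/
def hasFreq (s : Seq3) (v : Fin 3 → ℝ) : Prop :=
  Tendsto (fun r : ℕ => (r : ℝ)⁻¹ • birk s r) atTop (nhds v)

/-- The lexicographic order on `Σ⁺`. -/
def lexLe (s t : Seq3) : Prop :=
  s = t ∨ ∃ n, (∀ i, i < n → s i = t i) ∧ s n < t n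

/-- The set `Max` of maximal sequences. -/
def MaxSet : Set Seq3 := {w | w 0 = 2 ∧ ∀ r : ℕ, lexLe (shift^[r] w) w}

/-- The symbolic β-shift `B(w)`. -/
def BetaShift (w : Seq3) : Set Seq3 := {s | ∀ r : ℕ, lexLe (shift^[r] s) w}

/-- The digit frequency set `DF(w)`. -/
def DF (w : Seq3) : Set (Fin 3 → ℝ) := {v | ∃ s ∈ BetaShift w, hasFreq s v}

/-- The Misiurewicz–Ziemian digit frequency set `DF_MZ(X)` of a subset `X ⊆ Σ⁺`. -/
def DFMZ (X : Set Seq3) : Set (Fin 3 → ℝ) :=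
  {v | ∃ (s : ℕ → Seq3) (r : ℕ → ℕ), (∀ i, s i ∈ X) ∧ Tendsto r atTop atTop ∧
    Tendsto (fun i => (r i : ℝ)⁻¹ • birk (s i) (r i)) atTop (nhds v)}

/-- The standard 2-simplex `Δ ⊆ ℝ³`. -/
def Delta : Set (Fin 3 → ℝ) := {α | (∀ i, 0 ≤ α i) ∧ α 0 + α 1 + α 2 = 1}

/-- `Δ' = {α ∈ Δ : α₂ > 0}`. -/
def Delta' : Set (Fin 3 → ℝ) := {α | α ∈ Delta ∧ 0 < α 2}

/-- `I` is the infimax sequence of `α`: the infimum, in the lexicographic order, of the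
(nonempty) set of maximal sequences with digit frequency `α`; it belongs to `Max`. -/
def IsInfimax (α : Fin 3 → ℝ) (I : Seq3) : Prop :=
  {w | w ∈ MaxSet ∧ hasFreq w α}.Nonempty ∧ I ∈ MaxSet ∧
    (∀ w, w ∈ MaxSet ∧ hasFreq w α → lexLe I w) ∧
    (∀ b : Seq3, (∀ w, w ∈ MaxSet ∧ hasFreq w α → lexLe b w) → lexLe b I)

/-- The closure of the forward `σ`-orbit of `s` (e.g. `C_α` is `orbitClosure I(α)`). -/
def orbitClosure (s : Seq3) : Set Seq3 := closure {t | ∃ r : ℕ, shift^[r] s = t}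

/-- A vector in `ℝ³` is rational if all its coordinates are. -/
def IsRat (v : Fin 3 → ℝ) : Prop := ∀ i, ∃ q : ℚ, v i = (q : ℝ)

/-- A minimal set of a continuous map: a nonempty compact invariant set in which every
point has dense forward orbit. -/
def IsMinimalSet {X : Type*} [TopologicalSpace X] (f : X → X) (C : Set X) : Prop :=
  C.Nonempty ∧ IsCompact C ∧ Set.MapsTo f C C ∧
    ∀ x ∈ C, C ⊆ closure {y | ∃ n : ℕ, f^[n] x = y}


theorem shift_iter (r : ℕ) (s : Seq3) : shift^[r] s = fun n => s (r + n) := by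
  induction r generalizing s with
  | zero => simp
  | succ r ih =>
    rw [Function.iterate_succ_apply, ih]
    funext n
    simp only [shift]
    congr 1
    omega

def slt (s t : Seq3) : Prop := ∃ n, (∀ i, i < n → s i = t i) ∧ s n < t n

theorem lex_total (s t : Seq3) : lexLe s t ∨ slt t s := by
  by_cases h : s = t
  · exact Or.inl (Or.inl h)
  · have h' : ∃ n, s n ≠ t n := by
      by_contra hc
      push Not at hc
      exact h (funext hc)
    classical
    have h1 := Nat.find_spec h'
    have h2 : ∀ i, i < Nat.find h' → s i = t i := fun i hi => by
      have := Nat.find_min h' hi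
      simpa using this
    rcases lt_or_gt_of_ne h1 with h3 | h3
    · exact Or.inl (Or.inr ⟨_, h2, h3⟩)
    · exact Or.inr ⟨_, fun i hi => (h2 i hi).symm, h3⟩

theorem lex_antisymm (s t : Seq3) (h : lexLe s t) (h' : slt t s) : False := by
  obtain ⟨n, hn, hn'⟩ := h'
  rcases h with rfl | ⟨m, hm, hm'⟩
  · exact lt_irrefl _ hn'
  · rcases lt_trichotomy n m with h | h | h
    · have := hm n h; rw [this] at hn'; exact lt_irrefl _ hn'
    · subst h; exact lt_asymm hn' hm'
    · have := hn m h; rw [this] at hm'; exact lt_irrefl _ hm'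

theorem lex_trans (s t u : Seq3) (h : lexLe s t) (h' : lexLe t u) : lexLe s u := by
  rcases h with rfl | ⟨m, hm, hm'⟩
  · exact h'
  rcases h' with rfl | ⟨n, hn, hn'⟩
  · exact Or.inr ⟨m, hm, hm'⟩
  · rcases lt_trichotomy n m with h | h | h
    · exact Or.inr ⟨n, fun i hi => (hm i (by omega)).trans (hn i hi), by rw [hm n h]; exact hn'⟩
    · subst h; exact Or.inr ⟨n, fun i hi => (hm i (by omega)).trans (hn i hi), hm'.trans hn'⟩
    · exact Or.inr ⟨m, fun i hi => (hm i (by omega)).trans (hn i (by omega)), by rw [← hn m h]; exact hm'⟩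

def pre (s : Seq3) (r : ℕ) : List (Fin 3) := (List.range r).map s

@[simp] theorem pre_length (s : Seq3) (r : ℕ) : (pre s r).length = r := by simp [pre]

theorem pre_getD (s : Seq3) (r n : ℕ) (h : n < r) : (pre s r).getD n 0 = s n := by
  simp [pre, List.getD, h]

theorem pre_succ (s : Seq3) (r : ℕ) : pre s (r+1) = pre s r ++ [s r] := by
  simp [pre, List.range_succ]

theorem pre_add (s : Seq3) (a b : ℕ) : pre s (a+b) = pre s a ++ pre (fun n => s (a+n)) b := by
  simp [pre, List.range_add, Function.comp_def]

noncomputable def disc (α : Fin 3 → ℝ) (i : Fin 3) (l : List (Fin 3)) : ℝ :=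
  (l.count i : ℝ) - α i * l.length

@[simp] theorem disc_nil (α : Fin 3 → ℝ) (i) : disc α i [] = 0 := by simp [disc]

theorem disc_append (α : Fin 3 → ℝ) (i) (l m) : disc α i (l ++ m) = disc α i l + disc α i m := by
  simp [disc]; ring

theorem disc_le (α : Fin 3 → ℝ) (i) (h0 : 0 ≤ α i) (h1 : α i ≤ 1) (l) :
    |disc α i l| ≤ l.length := by
  have h2 : (l.count i : ℝ) ≤ l.length := by exact_mod_cast List.count_le_length
  have h3 : (0:ℝ) ≤ l.count i := by positivity
  have h4 : (0:ℝ) ≤ l.length := by positivity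
  unfold disc
  rw [abs_le]; constructor <;> nlinarith

theorem birk_eq (s : Seq3) (r : ℕ) (i : Fin 3) : birk s r i = (pre s r).count i := by
  induction r with
  | zero => simp [birk, pre]
  | succ r ih =>
    unfold birk at *
    rw [Finset.sum_range_succ, pre_succ, Pi.add_apply, ih]
    simp [kappa, shift_iter, List.count_singleton]
    simp [eq_comm]

theorem hasFreq_iff (s : Seq3) (α : Fin 3 → ℝ) : hasFreq s α ↔
    ∀ ε > 0, ∃ R, ∀ r ≥ R, ∀ i, |disc α i (pre s r)| ≤ ε * r := by
  unfold hasFreq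
  have key : ∀ r : ℕ, 0 < r → ∀ i, ((r:ℝ)⁻¹ • birk s r) i - α i = (disc α i (pre s r)) / r := by
    intro r hr i
    have : (r:ℝ) ≠ 0 := by positivity
    simp only [Pi.smul_apply, birk_eq, disc, smul_eq_mul, pre_length]
    field_simp
  rw [Metric.tendsto_atTop]
  constructor
  · intro h ε hε
    obtain ⟨R, hR⟩ := h ε hε
    refine ⟨R + 1, fun r hr i => ?_⟩
    have hr0 : (0:ℝ) < r := by exact_mod_cast (by omega : 0 < r)
    have := (dist_le_pi_dist _ _ i).trans (hR r (by omega)).le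
    rw [Real.dist_eq, key r (by omega), abs_div, abs_of_pos hr0, div_le_iff₀ hr0] at this
    exact this
  · intro h ε hε
    obtain ⟨R, hR⟩ := h (ε/2) (by positivity)
    refine ⟨R + 1, fun r hr => ?_⟩
    have hr0 : (0:ℝ) < r := by exact_mod_cast (by omega : 0 < r)
    rw [dist_pi_lt_iff hε]
    intro i
    rw [Real.dist_eq, key r (by omega), abs_div, abs_of_pos hr0, div_lt_iff₀ hr0]
    have := hR r (by omega) i
    nlinarith

def Free (x : Seq3) (l : List (Fin 3)) : Prop :=
  ∀ i < l.length, ∃ j, i + j < l.length ∧ (∀ m < j, l.getD (i+m) 0 = x m) ∧ l.getD (i+j) 0 < x j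

theorem Free.append {x l m} (hl : Free x l) (hm : Free x m) : Free x (l ++ m) := by
  intro i hi
  by_cases h : i < l.length
  · obtain ⟨j, h1, h2, h3⟩ := hl i h
    refine ⟨j, by simp; omega, fun t ht => ?_, ?_⟩
    · rw [List.getD_append _ _ _ _ (by omega)]; exact h2 t ht
    · rw [List.getD_append _ _ _ _ (by omega)]; exact h3
  · simp at hi
    obtain ⟨j, h1, h2, h3⟩ := hm (i - l.length) (by omega)
    refine ⟨j, by simp; omega, fun t ht => ?_, ?_⟩
    · rw [List.getD_append_right _ _ _ _ (by omega), ← h2 t ht]; congr 1; omega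
    · rw [List.getD_append_right _ _ _ _ (by omega)]; convert h3 using 2; omega

theorem Free.nil {x} : Free x [] := by intro i hi; simp at hi

def catW (W : ℕ → List (Fin 3)) : ℕ → List (Fin 3)
  | 0 => []
  | n+1 => catW W n ++ W n

theorem lemA (x : Seq3) (α : Fin 3 → ℝ) (h0 : ∀ i, 0 ≤ α i) (h1 : ∀ i, α i ≤ 1)
    (h : ∀ ε > 0, ∃ u : List (Fin 3), u ≠ [] ∧ Free x u ∧ ∀ i, |disc α i u| ≤ ε * u.length) :
    ∃ s : Seq3, (∀ r, slt (fun n => s (r+n)) x) ∧ hasFreq s α := by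
  choose U hU0 hU1 hU2 using fun n : ℕ => h (1/((n:ℝ)+1)) (by positivity)
  let L : ℕ → ℕ := fun j => (j+1) * (U j).length
  let J : ℕ → ℕ := fun n => Nat.findGreatest (fun j => L j ≤ n) n
  have hJ1 : ∀ n ≥ L 0, L (J n) ≤ n := fun n hn =>
    Nat.findGreatest_spec (P := fun j => L j ≤ n) (Nat.zero_le n) hn
  have hJ2 : ∀ j, ∀ n ≥ max j (L j), j ≤ J n := fun j n hn =>
    Nat.le_findGreatest (P := fun j => L j ≤ n) (by omega) (by omega)
  let W : ℕ → List (Fin 3) := fun n => U (J n)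
  let P := catW W
  have hP : ∀ n, P (n+1) = P n ++ W n := fun n => rfl
  have hWpos : ∀ n, 0 < (W n).length := fun n => List.length_pos_iff.mpr (hU0 _)
  have hPlen : ∀ n, n ≤ (P n).length := by
    intro n
    induction n with
    | zero => simp
    | succ n ih => have := hWpos n; rw [hP, List.length_append]; omega
  have hPfree : ∀ n, Free x (P n) := by
    intro n
    induction n with
    | zero => exact Free.nil
    | succ n ih => rw [hP]; exact ih.append (hU1 _)
  have hmono : ∀ n d, ∀ i < (P n).length, (P (n+d)).getD i 0 = (P n).getD i 0 ∧ i < (P (n+d)).length := by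
    intro n d i hi
    induction d with
    | zero => exact ⟨rfl, hi⟩
    | succ d ih =>
      rw [← Nat.add_assoc, hP, List.getD_append _ _ _ _ ih.2]
      exact ⟨ih.1, by rw [List.length_append]; omega⟩
  let s : Seq3 := fun i => (P (i+1)).getD i 0
  have hs : ∀ n, ∀ i < (P n).length, (P n).getD i 0 = s i := by
    intro n i hi
    have hi' : i < (P (i+1)).length := hPlen (i+1)
    rw [← (hmono n (i+1) i hi).1, add_comm, (hmono (i+1) n i hi').1]
  have hpre : ∀ n, ∀ r ≤ (P n).length, pre s r = (P n).take r := by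
    intro n r hr
    apply List.ext_getElem
    · simp [hr]
    · intro i h1 h2
      simp only [pre_length] at h1
      have := hs n i (by omega)
      rw [List.getD_eq_getElem _ _ (by omega)] at this
      simp [pre, this]
  refine ⟨s, fun r => ?_, ?_⟩
  · obtain ⟨j, h1, h2, h3⟩ := hPfree (r+1) r (hPlen (r+1))
    refine ⟨j, fun m hm => ?_, ?_⟩
    · show s (r+m) = x m
      rw [← hs (r+1) _ (by omega)]; exact h2 m hm
    · show s (r+j) < x j
      rw [← hs (r+1) _ h1]; exact h3
  · rw [hasFreq_iff]
    intro ε hε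
    have hdW : ∀ i, (fun n => disc α i (W n)) =o[atTop] (fun n => ((W n).length : ℝ)) := by
      intro i
      rw [Asymptotics.isLittleO_iff]
      intro c hc
      obtain ⟨j, hj⟩ := exists_nat_one_div_lt hc
      filter_upwards [eventually_ge_atTop (max j (L j))] with n hn
      have h3 := hJ2 j n hn
      have h4 := hU2 (J n) i
      rw [Real.norm_eq_abs, Real.norm_eq_abs, abs_of_nonneg (a := ((W n).length : ℝ)) (by positivity)]
      refine h4.trans (mul_le_mul_of_nonneg_right ?_ (by positivity))
      refine le_trans ?_ hj.le
      gcongr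
    have hlsum : ∀ n, ∑ m ∈ Finset.range n, ((W m).length : ℝ) = (P n).length := by
      intro n
      induction n with
      | zero => simp [P, catW]
      | succ n ih => rw [Finset.sum_range_succ, ih, hP]; simp
    have hdsum : ∀ i n, ∑ m ∈ Finset.range n, disc α i (W m) = disc α i (P n) := by
      intro i n
      induction n with
      | zero => simp [P, catW]
      | succ n ih => rw [Finset.sum_range_succ, ih, hP, disc_append]
    have hdP : ∀ i, (fun n => disc α i (P n)) =o[atTop] (fun n => ((P n).length : ℝ)) := by
      intro i
      have := (hdW i).sum_range (fun n => by positivity) (by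
        simp only [hlsum]
        refine tendsto_atTop_mono (fun n => ?_) tendsto_natCast_atTop_atTop
        exact_mod_cast hPlen n)
      simpa only [hlsum, hdsum] using this
    have e1 : ∀ᶠ n in atTop, ∀ i, |disc α i (P n)| ≤ ε/2 * (P n).length := by
      rw [eventually_all]
      intro i
      have := (Asymptotics.isLittleO_iff.mp (hdP i)) (half_pos hε)
      simpa using this
    have e2 : ∀ᶠ n in atTop, ((W n).length : ℝ) ≤ ε/2 * (P n).length := by
      obtain ⟨j, hj⟩ := exists_nat_one_div_lt (half_pos hε)
      filter_upwards [eventually_ge_atTop (max j (L j)), eventually_ge_atTop (L 0)] with n hn hn0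
      have h3 := hJ2 j n hn
      have h4 := hJ1 n hn0
      have h5 : ((j:ℝ)+1) * (W n).length ≤ (P n).length := by
        have : (j+1) * (W n).length ≤ (P n).length :=
          le_trans (Nat.mul_le_mul_right _ (by omega)) (h4.trans (hPlen n))
        exact_mod_cast this
      have h6 : (1:ℝ) ≤ ε/2 * (j+1) := by
        rw [div_lt_iff₀ (by positivity)] at hj; exact hj.le
      have : (0:ℝ) ≤ (W n).length := by positivity
      nlinarith
    obtain ⟨n0, hn0⟩ := eventually_atTop.mp (e1.and e2)
    refine ⟨(P n0).length, fun r hr i => ?_⟩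
    have hex : ∃ m, r < (P m).length := ⟨r+1, hPlen (r+1)⟩
    classical
    obtain ⟨n, hn, hn1, hn2⟩ : ∃ n ≥ n0, (P n).length ≤ r ∧ r < (P (n+1)).length := by
      have hsp := Nat.find_spec hex
      have hgt : n0 < Nat.find hex := by
        by_contra hc
        push Not at hc
        obtain ⟨d, hd⟩ := Nat.exists_eq_add_of_le hc
        have := (hmono (Nat.find hex) d r hsp).2
        rw [← hd] at this
        omega
      obtain ⟨n, hn⟩ := Nat.exists_eq_succ_of_ne_zero (by omega : Nat.find hex ≠ 0)
      refine ⟨n, by omega, ?_, ?_⟩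
      · have := Nat.find_min hex (m := n) (by omega)
        omega
      · rw [hn] at hsp; exact hsp
    rw [hpre (n+1) r hn2.le, hP, List.take_append, List.take_of_length_le hn1, disc_append]
    have a1 := (hn0 n hn).1 i
    have a2 := (hn0 n hn).2
    have a3 := disc_le α i (h0 i) (h1 i) ((W n).take (r - (P n).length))
    have a4 : (((W n).take (r - (P n).length)).length : ℝ) ≤ (W n).length := by
      exact_mod_cast List.length_take_le' _ _
    have a5 : ((P n).length : ℝ) ≤ r := by exact_mod_cast hn1
    have a6 := abs_add_le (disc α i (P n)) (disc α i ((W n).take (r - (P n).length)))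
    nlinarith

def Weak (x : Seq3) (u : List (Fin 3)) : Prop :=
  ∀ i < u.length, (∀ m, i + m < u.length → u.getD (i+m) 0 = x m) ∨
    ∃ j, i + j < u.length ∧ (∀ m < j, u.getD (i+m) 0 = x m) ∧ u.getD (i+j) 0 < x j

theorem lowerW (x : Seq3) (hx : x 0 = 2) (u : List (Fin 3)) : Weak x u →
    ∃ u' : List (Fin 3), Free x u' ∧ u'.length = u.length ∧
      ∀ i, |(u'.count i : ℝ) - u.count i| ≤ 1 := by
  induction u using List.reverseRecOn with
  | nil => intro _; exact ⟨[], Free.nil, rfl, by simp⟩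
  | append_singleton l a ih =>
    intro h
    by_cases ha : a = 0
    · have hl : Weak x l := by
        intro i hi
        have hlt : ∀ m, i + m < l.length → (l ++ [a]).getD (i+m) 0 = l.getD (i+m) 0 :=
          fun m hm => List.getD_append _ _ _ _ hm
        rcases h i (by simp; omega) with h1 | ⟨j, h1, h2, h3⟩
        · left
          intro m hm
          rw [← hlt m hm]; exact h1 m (by simp; omega)
        · simp at h1
          by_cases hj : i + j < l.length
          · right
            refine ⟨j, hj, fun m hm => ?_, ?_⟩
            · rw [← hlt m (by omega)]; exact h2 m hm
            · rw [← hlt j (by omega)]; exact h3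
          · left
            intro m hm
            rw [← hlt m hm]; exact h2 m (by omega)
      obtain ⟨u', h1, h2, h3⟩ := ih hl
      refine ⟨u' ++ [a], h1.append ?_, by simp [h2], fun i => ?_⟩
      · intro i hi
        simp at hi
        subst hi
        exact ⟨0, by simp, by simp, by simp [ha, hx]⟩
      · have := h3 i
        simpa using this
    · refine ⟨l ++ [0], ?_, by simp, fun i => ?_⟩
      · have hlt : ∀ m, m < l.length → (l ++ [0]).getD m 0 = (l ++ [a]).getD m 0 :=
          fun m hm => by rw [List.getD_append _ _ _ _ hm, List.getD_append _ _ _ _ hm]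
        have hla : (l ++ [a]).getD l.length 0 = a := by
          rw [List.getD_append_right _ _ _ _ le_rfl]; simp
        have hl0 : (l ++ [(0 : Fin 3)]).getD l.length 0 = 0 := by
          rw [List.getD_append_right _ _ _ _ le_rfl]; simp
        have ha0 : 0 < a := Fin.pos_of_ne_zero ha
        intro i hi
        simp at hi
        rcases h i (by simp; omega) with h1 | ⟨j, h1, h2, h3⟩
        · refine ⟨l.length - i, by simp; omega, fun m hm => ?_, ?_⟩
          · rw [hlt _ (by omega)]; exact h1 m (by simp; omega)
          · have := h1 (l.length - i) (by simp; omega)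
            rw [show i + (l.length - i) = l.length by omega] at *
            rw [hl0, ← this, hla]; exact ha0
        · simp at h1
          refine ⟨j, by simp; omega, fun m hm => ?_, ?_⟩
          · rw [hlt _ (by omega)]; exact h2 m hm
          · by_cases hj : i + j < l.length
            · rw [hlt _ hj]; exact h3
            · have e : i + j = l.length := by omega
              rw [e, hla] at h3
              rw [e, hl0]; exact ha0.trans h3
      · simp only [List.count_append, List.count_singleton]
        push_cast
        rw [abs_le]
        split_ifs <;> constructor <;> norm_num

theorem weak_block (x v : Seq3) (N b : ℕ) (hv : v ∈ MaxSet) (hxv : ∀ i < N, v i = x i) :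
    Weak x (pre (fun n => v (b+n)) N) := by
  intro i hi
  simp only [pre_length] at *
  have hg : ∀ m, i + m < N → (pre (fun n => v (b+n)) N).getD (i+m) 0 = v (b + (i+m)) :=
    fun m hm => pre_getD _ _ _ hm
  have := hv.2 (b+i)
  rw [shift_iter] at this
  rcases this with h | ⟨n, h1, h2⟩
  · left
    intro m hm
    rw [hg m hm, ← hxv m (by omega), ← add_assoc]; exact congrFun h m
  · by_cases hn : i + n < N
    · right
      refine ⟨n, hn, fun m hm => ?_, ?_⟩
      · rw [hg m (by omega), ← hxv m (by omega), ← add_assoc]; exact h1 m hm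
      · rw [hg n hn, ← hxv n (by omega), ← add_assoc]; exact h2
    · left
      intro m hm
      rw [hg m hm, ← hxv m (by omega), ← add_assoc]; exact h1 m (by omega)

theorem chop (x v : Seq3) (N : ℕ) (hx : x 0 = 2) (hv : v ∈ MaxSet) (hxv : ∀ i < N, v i = x i)
    (M : ℕ) : ∃ u : List (Fin 3), Free x u ∧ u.length = M * N ∧
      ∀ i, |(u.count i : ℝ) - (pre v (M*N)).count i| ≤ M := by
  induction M with
  | zero => exact ⟨[], Free.nil, by simp, by simp [pre]⟩
  | succ M ih =>
    obtain ⟨u, h1, h2, h3⟩ := ih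
    obtain ⟨u', g1, g2, g3⟩ := lowerW x hx _ (weak_block x v N (M*N) hv hxv)
    refine ⟨u ++ u', h1.append g1, ?_, fun i => ?_⟩
    · rw [List.length_append, h2, g2, pre_length]; ring
    · rw [Nat.succ_mul, pre_add, List.count_append, List.count_append]
      have a := h3 i
      have b := g3 i
      push_cast
      rw [abs_le] at *
      constructor <;> linarith [a.1, a.2, b.1, b.2]

theorem infimax_approx (α : Fin 3 → ℝ) (x : Seq3) (hI : IsInfimax α x) (N : ℕ) :
    ∃ v ∈ MaxSet, hasFreq v α ∧ ∀ i < N, v i = x i := by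
  obtain ⟨⟨v0, hv0⟩, hM, hlb, hglb⟩ := hI
  by_contra hc
  push Not at hc
  let b : Seq3 := fun n => if n < N then x n else 2
  have hbe : ∀ n < N, b n = x n := fun n hn => by simp [b, hn]
  have hb2 : ∀ n, N ≤ n → b n = 2 := fun n hn => by simp [b, Nat.not_lt.mpr hn]
  have hle2 : ∀ a : Fin 3, ¬ (2 < a) := by decide
  have hb : lexLe b x := by
    apply hglb
    rintro v ⟨h1, h2⟩
    obtain ⟨i, hi, hne⟩ := hc v h1 h2
    rcases hlb v ⟨h1, h2⟩ with h | ⟨n, h3, h4⟩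
    · exact absurd (congrFun h i).symm hne
    · have hn : n ≤ i := by
        by_contra hlt
        exact hne (h3 i (by omega)).symm
      refine Or.inr ⟨n, fun j hj => ?_, ?_⟩
      · rw [hbe j (by omega)]; exact h3 j hj
      · rw [hbe n (by omega)]; exact h4
  have hbx : b = x := by
    rcases hb with h | ⟨n, h1, h2⟩
    · exact h
    · by_cases hn : n < N
      · rw [hbe n hn] at h2; exact absurd h2 (lt_irrefl _)
      · rw [hb2 n (by omega)] at h2; exact absurd h2 (hle2 _)
  have hx2 : ∀ n, x n = 2 := by
    have := hM.2 N
    rw [shift_iter] at this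
    have hs : ∀ n, x (N + n) = 2 := fun n => by rw [← hbx]; exact hb2 _ (by omega)
    rcases this with h | ⟨n, h1, h2⟩
    · intro n; rw [← h]; exact hs n
    · simp only [hs] at h2; exact absurd h2 (hle2 _)
  obtain ⟨i, hi, hne⟩ := hc v0 hv0.1 hv0.2
  rcases hlb v0 hv0 with h | ⟨n, h1, h2⟩
  · exact hne (congrFun h i).symm
  · rw [hx2] at h2; exact absurd h2 (hle2 _)

theorem dirBack (w : Seq3) (α : Fin 3 → ℝ) (h0 : ∀ i, 0 ≤ α i) (h1 : ∀ i, α i ≤ 1)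
    (x : Seq3) (hI : IsInfimax α x) (hxw : lexLe x w) : α ∈ DF w := by
  obtain ⟨s, hs, hf⟩ := lemA x α h0 h1 (by
    intro ε hε
    obtain ⟨N, hN⟩ := exists_nat_one_div_lt (half_pos hε)
    obtain ⟨v, hv, hvf, hvx⟩ := infimax_approx α x hI (N+1)
    rw [hasFreq_iff] at hvf
    obtain ⟨R, hR⟩ := hvf (ε/2) (half_pos hε)
    obtain ⟨u, g1, g2, g3⟩ := chop x v (N+1) hI.2.1.1 hv hvx (R+1)
    refine ⟨u, ?_, g1, fun i => ?_⟩
    · intro hu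
      rw [hu] at g2
      simp at g2
    · have a := hR ((R+1)*(N+1)) (by nlinarith) i
      have b := g3 i
      simp only [disc, pre_length] at *
      rw [g2]
      rw [div_lt_iff₀ (by positivity)] at hN
      have hN' : ((R+1 : ℕ):ℝ) ≤ ε/2 * ((R+1) * (N+1) : ℕ) := by
        push_cast
        have : (0:ℝ) < (R:ℝ) + 1 := by positivity
        nlinarith
      rw [abs_le] at *
      constructor <;> linarith [a.1, a.2, b.1, b.2])
  refine ⟨s, fun r => ?_, hf⟩
  rw [shift_iter]
  exact lex_trans _ x _ (Or.inr (hs r)) hxw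

theorem hasFreq_tail (s : Seq3) (α : Fin 3 → ℝ) (h0 : ∀ i, 0 ≤ α i) (h1 : ∀ i, α i ≤ 1) (a : ℕ)
    (h : hasFreq (fun n => s (a+n)) α) : hasFreq s α := by
  rw [hasFreq_iff] at *
  intro ε hε
  obtain ⟨R, hR⟩ := h (ε/2) (half_pos hε)
  obtain ⟨T, hT⟩ := exists_nat_ge ((a:ℝ) / (ε/2))
  refine ⟨a + R + T, fun r hr i => ?_⟩
  obtain ⟨d, rfl⟩ := Nat.exists_eq_add_of_le (by omega : a ≤ r)
  rw [pre_add, disc_append]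
  have a1 := hR d (by omega) i
  have a2 := disc_le α i (h0 i) (h1 i) (pre s a)
  rw [pre_length] at a2
  rw [div_le_iff₀ (half_pos hε)] at hT
  have a3 : (T:ℝ) ≤ a + d := by exact_mod_cast (by omega : T ≤ a + d)
  have a4 : (0:ℝ) ≤ a := by positivity
  have a5 := abs_add_le (disc α i (pre s a)) (disc α i (pre (fun n => s (a+n)) d))
  push_cast
  nlinarith

theorem infimax_le (α : Fin 3 → ℝ) (x w : Seq3) (hI : IsInfimax α x)
    (h : ∀ N, ∃ v ∈ MaxSet, hasFreq v α ∧ ∀ i < N, v i = w i) : lexLe x w := by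
  rcases lex_total x w with h1 | ⟨n, h1, h2⟩
  · exact h1
  · obtain ⟨v, hv, hf, hvw⟩ := h (n+1)
    refine (lex_antisymm x v (hI.2.2.1 v ⟨hv, hf⟩) ⟨n, fun i hi => ?_, ?_⟩).elim
    · rw [hvw i (by omega)]; exact h1 i hi
    · rw [hvw n (by omega)]; exact h2

def glue (x : Seq3) (K : ℕ) (t : Seq3) : Seq3 :=
  fun n => if n < K then x n else if n < 2*K then 0 else t (n - 2*K)

theorem mkMax (x t : Seq3) (K : ℕ) (hK : 0 < K) (hx0 : x 0 = 2) (hxl : x (K-1) ≠ 0)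
    (hsuf : ∀ r, 0 < r → r < K → (∀ j, r + j < K → x (r+j) = x j) ∨
      ∃ j, r + j < K ∧ (∀ l < j, x (r+l) = x l) ∧ x (r+j) < x j)
    (ht : ∀ r, ∃ j < K, (∀ l < j, t (r+l) = x l) ∧ t (r+j) < x j) : glue x K t ∈ MaxSet := by
  have g1 : ∀ n, n < K → glue x K t n = x n := fun n hn => by simp [glue, hn]
  have g2 : ∀ n, K ≤ n → n < 2*K → glue x K t n = 0 := fun n hn hn' => by
    simp [glue, Nat.not_lt.mpr hn, hn']
  have g3 : ∀ n, glue x K t (2*K+n) = t n := fun n => by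
    simp [glue, show ¬ (2*K + n < K) by omega]
  refine ⟨by rw [g1 0 hK, hx0], fun r => ?_⟩
  rw [shift_iter]
  rcases Nat.eq_zero_or_pos r with rfl | hr
  · left; simp
  right
  show ∃ n, (∀ i, i < n → glue x K t (r+i) = glue x K t i) ∧ glue x K t (r+n) < glue x K t n
  by_cases hrK : r < K
  · rcases hsuf r hr hrK with h | ⟨j, h1, h2, h3⟩
    · classical
      have hex : ∃ j, K - r ≤ j ∧ x j ≠ 0 := ⟨K-1, by omega, hxl⟩
      have hsp := Nat.find_spec hex
      have hle : Nat.find hex ≤ K - 1 := Nat.find_min' hex ⟨by omega, hxl⟩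
      refine ⟨Nat.find hex, fun i hi => ?_, ?_⟩
      · have hm := Nat.find_min hex hi
        by_cases hri : r + i < K
        · rw [g1 _ hri, g1 i (by omega)]; exact h i hri
        · rw [g2 _ (by omega) (by omega), g1 i (by omega)]
          by_contra hne
          exact hm ⟨by omega, fun h => hne h.symm⟩
      · rw [g2 _ (by omega) (by omega), g1 _ (by omega)]
        exact Fin.pos_of_ne_zero hsp.2
    · refine ⟨j, fun i hi => ?_, ?_⟩
      · rw [g1 _ (by omega), g1 _ (by omega)]; exact h2 i hi
      · rw [g1 _ (by omega), g1 _ (by omega)]; exact h3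
  · by_cases hr2 : r < 2*K
    · refine ⟨0, by simp, ?_⟩
      rw [g2 _ (by omega) (by omega), g1 _ hK, hx0]; decide
    · obtain ⟨d, rfl⟩ := Nat.exists_eq_add_of_le (by omega : 2*K ≤ r)
      obtain ⟨j, h1, h2, h3⟩ := ht d
      refine ⟨j, fun i hi => ?_, ?_⟩
      · rw [Nat.add_assoc, g3, g1 _ (by omega)]; exact h2 i hi
      · rw [Nat.add_assoc, g3, g1 _ (by omega)]; exact h3

theorem glue_freq (x t : Seq3) (K : ℕ) (α : Fin 3 → ℝ) (h0 : ∀ i, 0 ≤ α i) (h1 : ∀ i, α i ≤ 1)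
    (h : hasFreq t α) : hasFreq (glue x K t) α := by
  apply hasFreq_tail _ α h0 h1 (2*K)
  convert h using 1
  funext n
  simp [glue, show ¬ (2*K + n < K) by omega]

def Unb (w : Seq3) (k : ℕ) : Prop := ∀ r, 0 < r → r < k → ∃ j, r + j < k ∧ w (r+j) ≠ w j

theorem Unb.strict {w : Seq3} {k : ℕ} (h : Unb w k) (hw : w ∈ MaxSet) (r : ℕ) (hr : 0 < r)
    (hrk : r < k) : ∃ j, r + j < k ∧ (∀ l < j, w (r+l) = w l) ∧ w (r+j) < w j := by
  obtain ⟨j, h1, h2⟩ := h r hr hrk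
  have := hw.2 r
  rw [shift_iter] at this
  rcases this with h3 | ⟨n, h3, h4⟩
  · exact absurd (congrFun h3 j) h2
  · have : n ≤ j := by
      by_contra hc
      exact h2 (h3 j (by omega))
    exact ⟨n, by omega, h3, h4⟩

theorem unb_periodic (w : Seq3) (hw : w ∈ MaxSet) (k : ℕ) (hk : 0 < k) (h : Unb w k)
    (hmax : ∀ K > k, ¬ Unb w K) : ∀ n, w (k + n) = w n := by
  by_contra hc
  push Not at hc
  classical
  obtain ⟨n, hn, hmin⟩ : ∃ n, w (k+n) ≠ w n ∧ ∀ m < n, w (k+m) = w m :=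
    ⟨Nat.find hc, Nat.find_spec hc, fun m hm => by simpa using Nat.find_min hc hm⟩
  have hlt : w (k+n) < w n := by
    have := hw.2 k
    rw [shift_iter] at this
    rcases this with h3 | ⟨m, h3, h4⟩
    · exact absurd (congrFun h3 n) hn
    · have e : m = n := by
        rcases lt_trichotomy m n with h5 | h5 | h5
        · have := hmin m h5
          simp only [] at h4
          rw [this] at h4
          exact absurd h4 (lt_irrefl _)
        · exact h5
        · exact absurd (h3 n h5) hn
      subst e
      exact h4
  apply hmax (k+n+1) (by omega)
  intro r hr hrK
  by_contra hb
  push Not at hb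
  rcases lt_trichotomy r k with h1 | h1 | h1
  · obtain ⟨j, h2, h3⟩ := h r hr h1
    exact h3 (hb j (by omega))
  · subst h1
    exact hn (hb n (by omega))
  · obtain ⟨d, rfl⟩ := Nat.exists_eq_add_of_le h1.le
    refine lex_antisymm _ _ (hw.2 d) ?_
    rw [shift_iter]
    refine ⟨n - d, fun i hi => ?_, ?_⟩
    · simp only []
      rw [← hb i (by omega), Nat.add_assoc, hmin _ (by omega)]
    · simp only []
      rw [← hb (n-d) (by omega), show k + d + (n-d) = k + n by omega, show d + (n-d) = n by omega]
      exact hlt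

theorem case1 (w : Seq3) (hw : w ∈ MaxSet) (α : Fin 3 → ℝ) (h0 : ∀ i, 0 ≤ α i) (h1 : ∀ i, α i ≤ 1)
    (s : Seq3) (hs : s ∈ BetaShift w) (hf : hasFreq s α) (N : ℕ) (K : ℕ) (hNK : N + 1 < K)
    (hU : Unb w K) : ∃ v ∈ MaxSet, hasFreq v α ∧ ∀ i < N, v i = w i := by
  have hne2 : w (K-1) ≠ 2 := by
    intro h2
    obtain ⟨j, hj, hne⟩ := hU (K-1) (by omega) (by omega)
    have : j = 0 := by omega
    subst this
    exact hne (by rw [hw.1]; exact h2)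
  obtain ⟨b, hb1, hb2⟩ : ∃ b : Fin 3, w (K-1) < b ∧ ∀ c, w (K-1) < c → b ≤ c := by
    have : ∀ a : Fin 3, a ≠ 2 → ∃ b : Fin 3, a < b ∧ ∀ c, a < c → b ≤ c := by decide
    exact this _ hne2
  let x : Seq3 := fun n => if n = K-1 then b else w n
  have x1 : x (K-1) = b := by simp [x]
  have x2 : ∀ n, n ≠ K-1 → x n = w n := fun n hn => by simp [x, hn]
  refine ⟨glue x K s, mkMax x s K (by omega) ?_ ?_ ?_ ?_, glue_freq x s K α h0 h1 hf, ?_⟩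
  · rw [x2 0 (by omega), hw.1]
  · rw [x1]; intro hb; rw [hb] at hb1; exact absurd hb1 (Fin.not_lt_zero _)
  · intro r hr hrK
    obtain ⟨j, g1, g2, g3⟩ := hU.strict hw r hr hrK
    by_cases hj : r + j = K - 1
    · rw [hj] at g3
      rcases (hb2 _ g3).lt_or_eq with h | h
      · right
        refine ⟨j, g1, fun l hl => ?_, ?_⟩
        · rw [x2 _ (by omega), x2 _ (by omega)]; exact g2 l hl
        · rw [hj, x1, x2 _ (by omega)]; exact h
      · left
        intro i hi
        by_cases hij : i = j
        · subst hij
          rw [hj, x1, x2 _ (by omega)]; exact h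
        · rw [x2 _ (by omega), x2 _ (by omega)]; exact g2 i (by omega)
    · right
      refine ⟨j, g1, fun l hl => ?_, ?_⟩
      · rw [x2 _ (by omega), x2 _ (by omega)]; exact g2 l hl
      · rw [x2 _ (by omega), x2 _ (by omega)]; exact g3
  · intro r
    have := hs r
    rw [shift_iter] at this
    have hcase : (∀ l < K, s (r+l) = w l) ∨ ∃ j < K, (∀ l < j, s (r+l) = w l) ∧ s (r+j) < w j := by
      rcases this with h | ⟨n, h2, h3⟩
      · left; intro l _; exact congrFun h l
      · by_cases hn : n < K
        · right; exact ⟨n, hn, h2, h3⟩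
        · left; intro l hl; exact h2 l (by omega)
    rcases hcase with h | ⟨j, hj, h2, h3⟩
    · refine ⟨K-1, by omega, fun l hl => ?_, ?_⟩
      · rw [x2 _ (by omega)]; exact h l (by omega)
      · rw [x1, h _ (by omega)]; exact hb1
    · refine ⟨j, hj, fun l hl => ?_, ?_⟩
      · rw [x2 _ (by omega)]; exact h2 l (by omega)
      · by_cases hjK : j = K-1
        · rw [hjK] at h3 ⊢; rw [x1]; exact h3.trans hb1
        · rw [x2 _ hjK]; exact h3
  · intro i hi
    simp only [glue, show i < K by omega, if_true]
    exact x2 _ (by omega)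

def FreeB (x : Seq3) (K : ℕ) (l : List (Fin 3)) : Prop :=
  ∀ i < l.length, ∃ j < K, i + j < l.length ∧ (∀ m < j, l.getD (i+m) 0 = x m) ∧ l.getD (i+j) 0 < x j

def pad (x : Seq3) (K : ℕ) : Seq3 := fun n => if n < K then x n else 0

theorem FreeB.free {x K l L} (h : FreeB x K l) (hL : K ≤ L) : Free (pad x L) l := by
  intro i hi
  obtain ⟨j, hj, h1, h2, h3⟩ := h i hi
  refine ⟨j, h1, fun m hm => ?_, ?_⟩
  · simp only [pad, show m < L by omega, if_true]; exact h2 m hm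
  · simp only [pad, show j < L by omega, if_true]; exact h3

theorem pblock (w : Seq3) (hw : w ∈ MaxSet) (k : ℕ) (hk : 0 < k) (hU : Unb w k)
    (hper : ∀ n, w (k+n) = w n) (K : ℕ) (u : List (Fin 3)) (hu : u ≠ []) (h : FreeB w K u) :
    FreeB w (k+K) (pre w k ++ u) := by
  have e1 : ∀ m < k, (pre w k ++ u).getD m 0 = w m := fun m hm => by
    rw [List.getD_append _ _ _ _ (by simpa using hm), pre_getD _ _ _ hm]
  have e2 : ∀ m, (pre w k ++ u).getD (k + m) 0 = u.getD m 0 := fun m => by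
    rw [List.getD_append_right _ _ _ _ (by simp)]; simp
  intro i hi
  rw [List.length_append, pre_length] at *
  rcases Nat.eq_zero_or_pos i with rfl | hi0
  · obtain ⟨j, hj, h1, h2, h3⟩ := h 0 (List.length_pos_iff.mpr hu)
    refine ⟨k + j, by omega, by omega, fun m hm => ?_, ?_⟩
    · by_cases hmk : m < k
      · rw [Nat.zero_add, e1 m hmk]
      · obtain ⟨d, rfl⟩ := Nat.exists_eq_add_of_le (by omega : k ≤ m)
        have := h2 d (by omega)
        rw [Nat.zero_add] at *
        rw [e2, hper]; exact this
    · rw [Nat.zero_add] at *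
      rw [e2, hper]; exact h3
  · by_cases hik : i < k
    · obtain ⟨j, h1, h2, h3⟩ := hU.strict hw i hi0 hik
      refine ⟨j, by omega, by omega, fun m hm => ?_, ?_⟩
      · rw [e1 _ (by omega)]; exact h2 m hm
      · rw [e1 _ (by omega)]; exact h3
    · obtain ⟨d, rfl⟩ := Nat.exists_eq_add_of_le (by omega : k ≤ i)
      obtain ⟨j, hj, h1, h2, h3⟩ := h d (by omega)
      refine ⟨j, by omega, by omega, fun m hm => ?_, ?_⟩
      · rw [Nat.add_assoc, e2]; exact h2 m hm
      · rw [Nat.add_assoc, e2]; exact h3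

theorem pblocks (w : Seq3) (hw : w ∈ MaxSet) (k : ℕ) (hk : 0 < k) (hU : Unb w k)
    (hper : ∀ n, w (k+n) = w n) (q : List (Fin 3)) (hq : q ≠ []) (h : FreeB w k q) (l : ℕ) :
    ∃ u, u ≠ [] ∧ FreeB w ((l+1)*k) u ∧ u.length = l * k + q.length ∧
      ∀ i, u.count i = l * (pre w k).count i + q.count i := by
  induction l with
  | zero => exact ⟨q, hq, by simpa using h, by simp, by simp⟩
  | succ l ih =>
    obtain ⟨u, h1, h2, h3, h4⟩ := ih
    refine ⟨pre w k ++ u, by simp [h1], ?_, ?_, fun i => ?_⟩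
    · have := pblock w hw k hk hU hper _ u h1 h2
      convert this using 1; ring
    · rw [List.length_append, h3, pre_length]; ring
    · rw [List.count_append, h4]; ring

theorem rearr (w : Seq3) (hw : w ∈ MaxSet) (k : ℕ) (hk : 0 < k) (hU : Unb w k)
    (hper : ∀ n, w (k+n) = w n) (n L : ℕ) (hL : (n+1)*k ≤ L) (qs : List (List (Fin 3))) :
    ∀ A, (∀ q ∈ qs, q ≠ [] ∧ FreeB w k q) → A ≤ n * qs.length →
    ∃ u, Free (pad w L) u ∧ u.length = A * k + qs.flatten.length ∧
      ∀ i, u.count i = A * (pre w k).count i + qs.flatten.count i := by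
  induction qs with
  | nil =>
    intro A _ hA
    simp at hA
    subst hA
    exact ⟨[], Free.nil, by simp, by simp⟩
  | cons q qs ih =>
    intro A hq hA
    rw [List.length_cons, Nat.mul_succ] at hA
    obtain ⟨u, h1, h2, h3⟩ := ih (A - min A n) (fun q' h => hq q' (by simp [h])) (by omega)
    obtain ⟨v, g0, g1, g2, g3⟩ := pblocks w hw k hk hU hper q (hq q (by simp)).1 (hq q (by simp)).2 (min A n)
    obtain ⟨c, hc⟩ : ∃ c, A - min A n = c := ⟨_, rfl⟩
    obtain ⟨d, hd⟩ : ∃ d, min A n = d := ⟨_, rfl⟩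
    have hA' : A = d + c := by omega
    have hdn : d ≤ n := by omega
    rw [hc] at h2 h3
    rw [hd] at g1 g2 g3
    refine ⟨v ++ u, (g1.free (le_trans (Nat.mul_le_mul_right k (by omega)) hL)).append h1, ?_, fun i => ?_⟩
    · rw [List.length_append, h2, g2, List.flatten_cons, List.length_append, hA']; ring
    · rw [List.count_append, h3, g3, List.flatten_cons, List.count_append, hA']; ring

theorem decomp (w : Seq3) (hw : w ∈ MaxSet) (k : ℕ) (hk : 0 < k) (s : Seq3) (hs : s ∈ BetaShift w)
    (R : ℕ) : ∃ r ≥ R, ∃ A, ∃ qs : List (List (Fin 3)),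
      (∀ q ∈ qs, q ≠ [] ∧ FreeB w k q) ∧ qs.flatten.length ≤ qs.length * k ∧
      r = A * k + qs.flatten.length ∧
      ∀ i, (pre s r).count i = A * (pre w k).count i + qs.flatten.count i := by
  induction R with
  | zero => exact ⟨0, le_rfl, 0, [], by simp, by simp, by simp, by simp [pre]⟩
  | succ R ih =>
    obtain ⟨b, hb, A, qs, h1, h2, h3, h4⟩ := ih
    have := hs b
    rw [shift_iter] at this
    have hcase : (∀ l < k, s (b+l) = w l) ∨ ∃ j < k, (∀ l < j, s (b+l) = w l) ∧ s (b+j) < w j := by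
      rcases this with h | ⟨n, h2, h3⟩
      · left; intro l _; exact congrFun h l
      · by_cases hn : n < k
        · right; exact ⟨n, hn, h2, h3⟩
        · left; intro l hl; exact h2 l (by omega)
    rcases hcase with h | ⟨j, hj, g1, g2⟩
    · refine ⟨b + k, by omega, A+1, qs, h1, h2, by rw [h3]; ring, fun i => ?_⟩
      have e : pre (fun n => s (b+n)) k = pre w k := by
        simp only [pre]
        apply List.map_congr_left
        intro l hl
        exact h l (by simpa using hl)
      rw [pre_add, List.count_append, h4, e]; ring
    · refine ⟨b + (j+1), by omega, A, pre (fun n => s (b+n)) (j+1) :: qs, ?_, ?_, ?_, fun i => ?_⟩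
      · intro q hq
        rw [List.mem_cons] at hq
        rcases hq with rfl | hq
        · constructor
          · intro he
            have := congrArg List.length he
            simp at this
          · intro i hi
            rw [pre_length] at *
            have hg : ∀ m, i + m < j + 1 → (pre (fun n => s (b+n)) (j+1)).getD (i+m) 0 = s (b + (i+m)) :=
              fun m hm => pre_getD _ _ _ hm
            have hm := hw.2 i
            rw [shift_iter] at hm
            have hc2 : (∃ n < j - i, (∀ l < n, w (i+l) = w l) ∧ w (i+n) < w n) ∨
                ((∀ l < j - i, w (i+l) = w l) ∧ w (i+(j-i)) ≤ w (j-i)) := by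
              rcases hm with h | ⟨n, h5, h6⟩
              · right; exact ⟨fun l _ => congrFun h l, (congrFun h (j-i)).le⟩
              · rcases lt_trichotomy n (j-i) with hn | hn | hn
                · left; exact ⟨n, hn, h5, h6⟩
                · right; rw [← hn]; exact ⟨h5, h6.le⟩
                · right; exact ⟨fun l hl => h5 l (by omega), (h5 _ hn).le⟩
            rcases hc2 with ⟨n, hn, h5, h6⟩ | ⟨h5, h6⟩
            · refine ⟨n, by omega, by omega, fun m hm => ?_, ?_⟩
              · rw [hg m (by omega), g1 _ (by omega)]; exact h5 m hm
              · rw [hg n (by omega), g1 _ (by omega)]; exact h6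
            · refine ⟨j - i, by omega, by omega, fun m hm => ?_, ?_⟩
              · rw [hg m (by omega), g1 _ (by omega)]; exact h5 m hm
              · rw [hg _ (by omega)]
                rw [show i + (j-i) = j by omega] at *
                exact g2.trans_le h6
        · exact h1 q hq
      · rw [List.flatten_cons, List.length_append, pre_length, List.length_cons, Nat.succ_mul]; omega
      · rw [List.flatten_cons, List.length_append, pre_length]; omega
      · rw [pre_add, List.count_append, h4, List.flatten_cons, List.count_append]; ring

theorem periodic_freq (w : Seq3) (k : ℕ) (hk : 0 < k) (hper : ∀ n, w (k+n) = w n)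
    (α : Fin 3 → ℝ) (h0 : ∀ i, 0 ≤ α i) (h1 : ∀ i, α i ≤ 1)
    (hp : ∀ i, disc α i (pre w k) = 0) : hasFreq w α := by
  have hb : ∀ r, ∀ i, |disc α i (pre w r)| ≤ k := by
    intro r
    induction r using Nat.strong_induction_on with
    | _ r ih =>
      intro i
      by_cases hr : r < k
      · have := disc_le α i (h0 i) (h1 i) (pre w r)
        rw [pre_length] at this
        exact this.trans (by exact_mod_cast hr.le)
      · obtain ⟨d, rfl⟩ := Nat.exists_eq_add_of_le (by omega : k ≤ r)
        rw [pre_add, disc_append, hp, zero_add]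
        simp only [hper]
        exact ih d (by omega) i
  rw [hasFreq_iff]
  intro ε hε
  obtain ⟨T, hT⟩ := exists_nat_ge ((k:ℝ) / ε)
  refine ⟨T, fun r hr i => (hb r i).trans ?_⟩
  rw [div_le_iff₀ hε] at hT
  have : (T:ℝ) ≤ r := by exact_mod_cast hr
  nlinarith

theorem case2 (w : Seq3) (hw : w ∈ MaxSet) (α : Fin 3 → ℝ) (h0 : ∀ i, 0 ≤ α i) (h1 : ∀ i, α i ≤ 1)
    (s : Seq3) (hs : s ∈ BetaShift w) (hf : hasFreq s α) (N : ℕ) (k : ℕ) (hk : 0 < k)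
    (hU : Unb w k) (hper : ∀ n, w (k+n) = w n) :
    ∃ v ∈ MaxSet, hasFreq v α ∧ ∀ i < N, v i = w i := by
  by_cases hp : ∀ i, disc α i (pre w k) = 0
  · exact ⟨w, hw, periodic_freq w k hk hper α h0 h1 hp, fun _ _ => rfl⟩
  push Not at hp
  obtain ⟨i0, hi0⟩ := hp
  obtain ⟨D, hD⟩ : ∃ D, |disc α i0 (pre w k)| = D := ⟨_, rfl⟩
  have hDpos : 0 < D := by rw [← hD]; exact abs_pos.mpr hi0
  have hkR : (0:ℝ) < k := by exact_mod_cast hk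
  obtain ⟨n0, hn0⟩ := exists_nat_ge (1 + 2 * (k:ℝ) / D)
  obtain ⟨n, hn1, hn2⟩ : ∃ n, n0 ≤ n ∧ N ≤ n := ⟨max n0 N, by omega, by omega⟩
  have hn3 : D + 2 * k ≤ n * D := by
    have : (n0:ℝ) ≤ n := by exact_mod_cast hn1
    have h5 : 1 + 2 * (k:ℝ) / D ≤ n := hn0.trans this
    have h6 := mul_le_mul_of_nonneg_right h5 hDpos.le
    have : (1 + 2 * (k:ℝ) / D) * D = D + 2 * k := by field_simp
    linarith
  obtain ⟨K, hK⟩ : ∃ K, K = (n+1)*k + 1 := ⟨_, rfl⟩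
  rw [hasFreq_iff] at hf
  obtain ⟨t, ht, htf⟩ := lemA (pad w K) α h0 h1 (by
    intro ε hε
    obtain ⟨R1, hR1⟩ := hf ε hε
    obtain ⟨R2, hR2⟩ := hf (D / (2*k)) (by positivity)
    obtain ⟨r, hr, A, qs, g1, g2, g3, g4⟩ := decomp w hw k hk s hs (R1 + R2 + 1)
    have hdd : ∀ i, disc α i (pre s r) = A * disc α i (pre w k) + disc α i qs.flatten := by
      intro i
      simp only [disc, g4, pre_length]
      rw [g3]; push_cast; ring
    have hA : A ≤ n * qs.length := by
      have a1 := hR2 r (by omega) i0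
      have a2 := disc_le α i0 (h0 i0) (h1 i0) qs.flatten
      have a3 : (qs.flatten.length : ℝ) ≤ qs.length * k := by exact_mod_cast g2
      have a4 : (r:ℝ) = A * k + qs.flatten.length := by exact_mod_cast g3
      have a5 : (A:ℝ) * D ≤ |disc α i0 (pre s r)| + |disc α i0 qs.flatten| := by
        rw [← hD, show (A:ℝ) * |disc α i0 (pre w k)| = |A * disc α i0 (pre w k)| by
          rw [abs_mul, abs_of_nonneg (a := (A:ℝ)) (by positivity)]]
        rw [show (A:ℝ) * disc α i0 (pre w k) = disc α i0 (pre s r) - disc α i0 qs.flatten by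
          rw [hdd]; ring]
        exact abs_sub _ _
      have a6 : D / (2*k) * r ≤ A * D / 2 + D / 2 * qs.length := by
        have : D / (2*k) * r ≤ D / (2*k) * (A * k + qs.length * k) := by
          apply mul_le_mul_of_nonneg_left _ (by positivity)
          linarith
        refine this.trans (le_of_eq ?_)
        field_simp
      have a7 : (A:ℝ) * D ≤ (n * qs.length) * D := by
        have : (0:ℝ) ≤ qs.length := by positivity
        nlinarith
      have := le_of_mul_le_mul_right a7 hDpos
      exact_mod_cast this
    obtain ⟨u, u1, u2, u3⟩ := rearr w hw k hk hU hper n K (by omega) qs A g1 hA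
    refine ⟨u, ?_, u1, fun i => ?_⟩
    · intro hu
      rw [← g3, hu] at u2
      simp at u2
      omega
    · have : disc α i u = disc α i (pre s r) := by
        simp only [disc, u3, g4, u2, pre_length]
        rw [← g3]
      rw [this, u2, ← g3]
      exact hR1 r (by omega) i)
  refine ⟨glue w K t, mkMax w t K (by omega) hw.1 ?_ ?_ ?_, glue_freq w t K α h0 h1 htf, ?_⟩
  · have : ∀ m, w (m * k) = 2 := by
      intro m
      induction m with
      | zero => simp [hw.1]
      | succ m ih => rw [Nat.succ_mul, add_comm, hper, ih]
    rw [hK, Nat.add_sub_cancel, this]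
    decide
  · intro r hr hrK
    have := hw.2 r
    rw [shift_iter] at this
    rcases this with h | ⟨j, h2, h3⟩
    · left; intro l _; exact congrFun h l
    · by_cases hn : r + j < K
      · right; exact ⟨j, hn, h2, h3⟩
      · left; intro l hl; exact h2 l (by omega)
  · intro r
    obtain ⟨j, h2, h3⟩ := ht r
    have hjK : j < K := by
      by_contra hc
      simp only [pad, hc, if_false] at h3
      exact absurd h3 (Fin.not_lt_zero _)
    refine ⟨j, hjK, fun l hl => ?_, ?_⟩
    · have := h2 l hl
      simpa only [pad, show l < K by omega, if_true] using this
    · simpa only [pad, hjK, if_true] using h3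
  · intro i hi
    have : i < K := by
      have : n + 1 ≤ (n+1)*k := Nat.le_mul_of_pos_right _ hk
      omega
    simp only [glue, this, if_true]

/-- For every `w ∈ Max` and every `α ∈ Δ'`, one has `α ∈ DF(w)` if and
only if `I(α) ≤ w` in the lexicographic order. -/
theorem stmt13 (w : Seq3) (hw : w ∈ MaxSet) (α : Fin 3 → ℝ) (hα : α ∈ Delta')
    (Iα : Seq3) (hI : IsInfimax α Iα) :
    α ∈ DF w ↔ lexLe Iα w := by
  have h0 : ∀ i, 0 ≤ α i := hα.1.1
  have h1 : ∀ i, α i ≤ 1 := by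
    have a := h0 0
    have b := h0 1
    have c := h0 2
    have d := hα.1.2
    intro i
    fin_cases i <;> simp <;> linarith
  refine ⟨?_, dirBack w α h0 h1 Iα hI⟩
  rintro ⟨s, hs, hf⟩
  apply infimax_le α Iα w hI
  intro N
  by_cases hbig : ∃ K, N + 1 < K ∧ Unb w K
  · obtain ⟨K, hK, hU⟩ := hbig
    exact case1 w hw α h0 h1 s hs hf N K hK hU
  · push Not at hbig
    classical
    have hsp := Nat.findGreatest_spec (P := fun K => Unb w K) (m := 1) (n := N+1) (by omega)
      (by intro r hr hr1; omega)
    have hpos := Nat.le_findGreatest (P := fun K => Unb w K) (m := 1) (n := N+1) (by omega)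
      (by intro r hr hr1; omega)
    refine case2 w hw α h0 h1 s hs hf N _ hpos hsp (unb_periodic w hw _ hpos hsp ?_)
    intro K hK hUK
    by_cases hKN : N + 1 < K
    · exact hbig K hKN hUK
    · exact Nat.findGreatest_is_greatest hK (by omega) hUK
end

section
/- For every α ∈ Δ', the infimax sequence I(α) is almost periodic under the shift σ (for every neighborhood U of I(α) in Σ⁺, the set of return times {r ∈ ℕ : σʳ(I(α)) ∈ U} has bounded gaps), and consequently C_α, the closure of the σ-orbit of I(α), is a minimal set: every point of C_α has dense forward orbit in C_α. -/
open Filter Topology MeasureTheory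

def cns (a : Fin 3) (t : Seq3) : Seq3 := fun n => Nat.casesOn n a t

def app : List (Fin 3) → Seq3 → Seq3
  | [], t => t
  | a :: l, t => cns a (app l t)

@[simp] theorem cns_zero (a : Fin 3) (t : Seq3) : cns a t 0 = a := rfl
@[simp] theorem cns_succ (a : Fin 3) (t : Seq3) (n : ℕ) : cns a t (n + 1) = t n := rfl
@[simp] theorem app_nil (t : Seq3) : app [] t = t := rfl
@[simp] theorem app_cons (a : Fin 3) (l : List (Fin 3)) (t : Seq3) :
    app (a :: l) t = cns a (app l t) := rfl
@[simp] theorem shift_cns (a : Fin 3) (t : Seq3) : shift (cns a t) = t := rfl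

theorem cns_shift (s : Seq3) : cns (s 0) (shift s) = s := by
  funext n; cases n <;> rfl

theorem app_append (l m : List (Fin 3)) (t : Seq3) : app (l ++ m) t = app l (app m t) := by
  induction l with
  | nil => rfl
  | cons a l ih => simp [ih]

theorem app_lt (l : List (Fin 3)) (t : Seq3) (i : ℕ) (h : i < l.length) :
    app l t i = l[i] := by
  induction l generalizing i with
  | nil => simp at h
  | cons a l ih =>
    cases i with
    | zero => rfl
    | succ i => simpa using ih i (by simpa using h)

theorem app_ge (l : List (Fin 3)) (t : Seq3) (i : ℕ) : app l t (l.length + i) = t i := by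
  induction l with
  | nil => simp
  | cons a l ih =>
    have : (a :: l).length + i = (l.length + i) + 1 := by simp; omega
    rw [this]; simpa using ih

theorem shift_iter_apply (s : Seq3) (k i : ℕ) : (shift^[k] s) i = s (k + i) := by
  induction k generalizing s with
  | zero => simp
  | succ k ih => rw [Function.iterate_succ_apply, ih]; simp [shift]; congr 1; omega

theorem shift_iter_app (l : List (Fin 3)) (t : Seq3) : shift^[l.length] (app l t) = t := by
  funext i; rw [shift_iter_apply, app_ge]

theorem lexLe_iff (s t : Seq3) : lexLe s t ↔ ∀ n, (∀ i, i < n → s i = t i) → s n ≤ t n := by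
  constructor
  · rintro (rfl | ⟨m, h1, h2⟩) n hn
    · exact le_rfl
    · rcases lt_trichotomy n m with h | h | h
      · exact (h1 n h).le
      · subst h; exact h2.le
      · have := hn m h; omega
  · intro h
    by_cases hst : s = t
    · exact Or.inl hst
    · right
      have hex : ∃ n, s n ≠ t n := by
        by_contra hc; push Not at hc; exact hst (funext hc)
      classical
      refine ⟨Nat.find hex, fun i hi => ?_, ?_⟩
      · have := Nat.find_min hex hi; simpa using this
      · refine lt_of_le_of_ne (h _ fun i hi => ?_) (Nat.find_spec hex)
        have := Nat.find_min hex hi; simpa using this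

theorem lexLe_refl (s : Seq3) : lexLe s s := Or.inl rfl

theorem lexLe_trans {s t u : Seq3} (h1 : lexLe s t) (h2 : lexLe t u) : lexLe s u := by
  rcases h1 with rfl | ⟨m, a1, a2⟩
  · exact h2
  rcases h2 with rfl | ⟨k, b1, b2⟩
  · exact Or.inr ⟨m, a1, a2⟩
  right
  rcases lt_trichotomy m k with h | h | h
  · exact ⟨m, fun i hi => (a1 i hi).trans (b1 i (hi.trans h)), by rw [← b1 m h]; exact a2⟩
  · subst h; exact ⟨m, fun i hi => (a1 i hi).trans (b1 i hi), a2.trans b2⟩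
  · exact ⟨k, fun i hi => (a1 i (hi.trans h)).trans (b1 i hi), by rw [a1 k h]; exact b2⟩

theorem lexLe_of_head {s t : Seq3} (h : s 0 < t 0) : lexLe s t :=
  Or.inr ⟨0, fun i hi => by omega, h⟩

theorem lexLe_cns {a : Fin 3} {s t : Seq3} : lexLe (cns a s) (cns a t) ↔ lexLe s t := by
  rw [lexLe_iff, lexLe_iff]
  constructor
  · intro h n hn
    refine h (n + 1) fun i hi => ?_
    cases i with
    | zero => rfl
    | succ i => exact hn i (by omega)
  · intro h n hn
    cases n with
    | zero => exact le_rfl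
    | succ n => exact h n fun i hi => hn (i + 1) (by omega)

theorem lexLe_app {l : List (Fin 3)} {s t : Seq3} : lexLe (app l s) (app l t) ↔ lexLe s t := by
  induction l with
  | nil => rfl
  | cons a l ih => simp [lexLe_cns, ih]

theorem lexLe_zero (t : Seq3) : lexLe (fun _ => 0) t := by
  rw [lexLe_iff]; intro n _; exact Fin.zero_le _

/-- coinduction principle -/
theorem lexLe_coind (X : Seq3 → Seq3 → Prop)
    (hX : ∀ a b, X a b → ∃ (c : Fin 3) (u : List (Fin 3)) (a' b' : Seq3), a = app (c :: u) a' ∧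
      b = app (c :: u) b' ∧ (X a' b' ∨ lexLe a' b')
       ) {a b : Seq3}
    (h : X a b) : lexLe a b := by
  rw [lexLe_iff]
  intro n
  induction n using Nat.strong_induction_on generalizing a b with
  | _ n ih =>
    intro hn
    obtain ⟨c, u, a', b', rfl, rfl, h1⟩ := hX a b h
    rcases h1 with h1 | h1
    · by_cases hl : n < (c :: u).length
      · rw [app_lt _ _ _ hl, app_lt _ _ _ hl]
      · obtain ⟨m, rfl⟩ := Nat.exists_eq_add_of_le (not_lt.1 hl)
        rw [app_ge, app_ge]
        refine ih m (by simp) h1 fun i hi => ?_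
        have := hn ((c :: u).length + i) (by omega)
        rwa [app_ge, app_ge] at this
    · exact (lexLe_iff _ _).1 (lexLe_app.2 h1) n hn

def Pre (P : List (Fin 3)) (s : Seq3) : Prop := ∃ t, s = app P t

theorem pre_iff (P : List (Fin 3)) (s : Seq3) :
    Pre P s ↔ ∀ i (h : i < P.length), s i = P[i] := by
  constructor
  · rintro ⟨t, rfl⟩ i h; exact app_lt _ _ _ h
  · intro h
    refine ⟨shift^[P.length] s, ?_⟩
    funext i
    by_cases hi : i < P.length
    · rw [app_lt _ _ _ hi, h i hi]
    · obtain ⟨m, rfl⟩ := Nat.exists_eq_add_of_le (not_lt.1 hi)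
      rw [app_ge, shift_iter_apply]

theorem pre_of_sandwich {P : List (Fin 3)} {s t : Seq3} (h1 : lexLe (app P fun _ => 0) s)
    (h2 : lexLe s (app P t)) : Pre P s := by
  induction P generalizing s with
  | nil => exact ⟨s, rfl⟩
  | cons a P ih =>
    have e1 := (lexLe_iff _ _).1 h1 0 (fun i hi => by omega)
    have e2 := (lexLe_iff _ _).1 h2 0 (fun i hi => by omega)
    simp at e1 e2
    have e : s 0 = a := le_antisymm e2 e1
    rw [← cns_shift s, e] at h1 h2 ⊢
    simp only [app_cons, lexLe_cns] at h1 h2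
    obtain ⟨u, hu⟩ := ih h1 h2
    exact ⟨u, by simp [hu]⟩

def blk (n : ℕ) : Fin 3 → List (Fin 3)
  | 0 => [1]
  | 1 => 2 :: (List.replicate n 0 ++ [0])
  | 2 => 2 :: List.replicate n 0

theorem blk_len_pos (n : ℕ) (a : Fin 3) : 0 < (blk n a).length := by
  fin_cases a <;> simp [blk]

theorem blk_len_le (n : ℕ) (a : Fin 3) : (blk n a).length ≤ n + 2 := by
  fin_cases a <;> simp [blk]

def Sb (n : ℕ) (y : Seq3) (j : ℕ) : Fin 3 :=
  if h : j < (blk n (y 0)).length then (blk n (y 0))[j]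
  else Sb n (shift y) (j - (blk n (y 0)).length)
termination_by j
decreasing_by
  have := blk_len_pos n (y 0)
  omega

theorem Sb_eq (n : ℕ) (y : Seq3) : Sb n y = app (blk n (y 0)) (Sb n (shift y)) := by
  funext j
  rw [Sb]
  split_ifs with h
  · rw [app_lt _ _ _ h]
  · obtain ⟨m, rfl⟩ := Nat.exists_eq_add_of_le (not_lt.1 h)
    rw [app_ge]; simp

def Lb (n : ℕ) (P : List (Fin 3)) : List (Fin 3) := P.flatMap (blk n)

theorem Sb_app (n : ℕ) (P : List (Fin 3)) (t : Seq3) : Sb n (app P t) = app (Lb n P) (Sb n t) := by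
  induction P with
  | nil => rfl
  | cons a P ih =>
    rw [Sb_eq]; simp [Lb, app_append] at *; rw [ih]

theorem Sb_head_ne (n : ℕ) (y : Seq3) : Sb n y 0 ≠ 0 := by
  rw [Sb_eq]
  generalize y 0 = a
  fin_cases a <;> simp [blk]

theorem Sb_mono (n : ℕ) {y z : Seq3} (h : lexLe y z) : lexLe (Sb n y) (Sb n z) := by
  by_cases h0 : Sb n y 0 < Sb n z 0
  · exact lexLe_of_head h0
  have key : ∀ y z, lexLe y z → Sb n y 0 < Sb n z 0 ∨ ∃ (c : Fin 3) (u : List (Fin 3)) (a' b' : Seq3),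
      Sb n y = app (c :: u) a' ∧
      Sb n z = app (c :: u) b' ∧ ((∃ y z, lexLe y z ∧ a' = Sb n y ∧ b' = Sb n z) ∨
        a' 0 < b' 0) := by
    intro y z h
    have e1 := (lexLe_iff _ _).1 h 0 (fun i hi => by omega)
    rcases eq_or_lt_of_le e1 with e | e
    · right
      have hh : lexLe (shift y) (shift z) := by
        rw [← cns_shift y, ← cns_shift z, e, lexLe_cns] at h; exact h
      have := blk_len_pos n (y 0)
      obtain ⟨c, u, hu⟩ := List.exists_cons_of_length_pos this
      refine ⟨c, u, Sb n (shift y), Sb n (shift z), ?_, ?_, Or.inl ⟨_, _, hh, rfl, rfl⟩⟩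
      · rw [← hu, ← Sb_eq]
      · rw [← hu, e, ← Sb_eq]
    · rw [Sb_eq n y, Sb_eq n z]
      have hz := Sb_head_ne n (shift z)
      generalize Sb n (shift z) = Z at *
      generalize Sb n (shift y) = Y at *
      generalize y 0 = p at *
      generalize z 0 = q at *
      have hcase : (p = 0 ∧ q = 1) ∨ (p = 0 ∧ q = 2) ∨ (p = 1 ∧ q = 2) := by omega
      rcases hcase with ⟨rfl, rfl⟩ | ⟨rfl, rfl⟩ | ⟨rfl, rfl⟩
      · left; simp [blk]
      · left; simp [blk]
      · right
        refine ⟨2, List.replicate n 0, cns 0 Y, Z, ?_, ?_, Or.inr ?_⟩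
        · simp [blk, app_append]
        · simp [blk]
        · simp; omega
  have key2 : ∀ a b, (∃ y z, lexLe y z ∧ a = Sb n y ∧ b = Sb n z ) → lexLe a b := by
    intro a b hab
    rw [lexLe_iff]
    intro m
    induction m using Nat.strong_induction_on generalizing a b with
    | _ m ih =>
      intro hm
      obtain ⟨y, z, hyz, rfl, rfl⟩ := hab
      rcases key y z hyz with h1 | ⟨c, u, a', b', e1, e2, h1⟩
      · exact (lexLe_iff _ _).1 (lexLe_of_head h1) m hm
      · rw [e1, e2] at hm ⊢
        rcases h1 with h1 | h1
        · by_cases hl : m < (c :: u).length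
          · rw [app_lt _ _ _ hl, app_lt _ _ _ hl]
          · obtain ⟨k, rfl⟩ := Nat.exists_eq_add_of_le (not_lt.1 hl)
            rw [app_ge, app_ge]
            refine ih k (by simp) _ _ h1 fun i hi => ?_
            have := hm ((c :: u).length + i) (by omega)
            rwa [app_ge, app_ge] at this
        · exact (lexLe_iff _ _).1 (lexLe_app.2 (lexLe_of_head h1)) m hm
  exact key2 _ _ ⟨y, z, h, rfl, rfl⟩

theorem shift_Sb_block (n : ℕ) (y : Seq3) :
    shift^[(blk n (y 0)).length] (Sb n y) = Sb n (shift y) := by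
  rw [Sb_eq n y, shift_iter_app]

theorem shift_Sb_cases (n : ℕ) (r : ℕ) (y : Seq3) :
    (Sb n y) r = 0 ∨ ∃ i, shift^[r] (Sb n y) = Sb n (shift^[i] y) := by
  induction r using Nat.strong_induction_on generalizing y with
  | _ r ih =>
    by_cases hl : r < (blk n (y 0)).length
    · rcases Nat.eq_zero_or_pos r with rfl | hr
      · right; exact ⟨0, rfl⟩
      · left
        rw [Sb_eq, app_lt _ _ _ hl]
        obtain ⟨r, rfl⟩ := Nat.exists_eq_succ_of_ne_zero hr.ne'
        generalize y 0 = a at *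
        fin_cases a
        · simp [blk] at hl
        · simp [blk, List.getElem_append]
        · simp [blk]
    · obtain ⟨m, rfl⟩ := Nat.exists_eq_add_of_le (not_lt.1 hl)
      have := blk_len_pos n (y 0)
      rcases ih m (by omega) (shift y) with h | ⟨i, h⟩
      · left; rw [Sb_eq, app_ge]; exact h
      · right
        refine ⟨i + 1, ?_⟩
        rw [add_comm, Function.iterate_add_apply, shift_Sb_block, h, Function.iterate_succ_apply]

theorem Sb_max (n : ℕ) {w : Seq3} (hw : w ∈ MaxSet) : Sb n w ∈ MaxSet := by
  have h2 : Sb n w 0 = 2 := by rw [Sb_eq, hw.1]; simp [blk]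
  refine ⟨h2, fun r => ?_⟩
  rcases shift_Sb_cases n r w with h | ⟨i, h⟩
  · apply lexLe_of_head
    rw [shift_iter_apply, h2]; simp [h]
  · rw [h]; exact Sb_mono n (hw.2 i)

def cnt (a : Fin 3) (s : Seq3) (N : ℕ) : ℕ := Nat.count (fun i => s i = a) N

theorem cnt_succ (a : Fin 3) (s : Seq3) (N : ℕ) :
    cnt a s (N + 1) = cnt a s N + if s N = a then 1 else 0 := by
  simp [cnt, Nat.count_succ]

theorem cnt_le (a : Fin 3) (s : Seq3) (N : ℕ) : cnt a s N ≤ N := Nat.count_le _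

theorem cnt_mono (a : Fin 3) (s : Seq3) : Monotone (cnt a s) := Nat.count_monotone _

theorem cnt_sum (s : Seq3) (N : ℕ) : cnt 0 s N + cnt 1 s N + cnt 2 s N = N := by
  induction N with
  | zero => simp [cnt]
  | succ N ih =>
    simp only [cnt_succ]
    generalize s N = a
    fin_cases a <;> simp <;> omega

theorem cnt_cns (a b : Fin 3) (t : Seq3) (N : ℕ) :
    cnt a (cns b t) (N + 1) = (if b = a then 1 else 0) + cnt a t N := by
  induction N with
  | zero => rw [cnt_succ]; simp only [cnt, Nat.count_zero, cns_zero]; by_cases h : b = a <;> simp [h]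
  | succ N ih => rw [cnt_succ, ih, cnt_succ, cns_succ]; omega

theorem cnt_app (a : Fin 3) (l : List (Fin 3)) (t : Seq3) (N : ℕ) :
    cnt a (app l t) (l.length + N) = l.count a + cnt a t N := by
  induction l with
  | nil => simp
  | cons b l ih =>
    have : (b :: l).length + N = (l.length + N) + 1 := by simp; omega
    rw [this]
    rw [app_cons, cnt_cns, ih, List.count_cons]
    simp only [beq_iff_eq]
    omega

structure HasRat (s : Seq3) (x y : ℝ) : Prop where
  top : Tendsto (cnt 2 s) atTop atTop
  h0 : Tendsto (fun N => (cnt 0 s N : ℝ) / cnt 2 s N) atTop (𝓝 x)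
  h1 : Tendsto (fun N => (cnt 1 s N : ℝ) / cnt 2 s N) atTop (𝓝 y)

theorem birk_apply (s : Seq3) (r : ℕ) (i : Fin 3) : birk s r i = cnt i s r := by
  unfold birk
  induction r with
  | zero => simp [cnt]
  | succ r ih =>
    rw [Finset.sum_range_succ, Pi.add_apply, ih, cnt_succ]
    simp [kappa, shift_iter_apply, eq_comm]

theorem hasFreq_iff_s14 (s : Seq3) (v : Fin 3 → ℝ) :
    hasFreq s v ↔ ∀ i, Tendsto (fun N => (cnt i s N : ℝ) / N) atTop (𝓝 (v i)) := by
  unfold hasFreq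
  rw [tendsto_pi_nhds]
  refine forall_congr' fun i => ?_
  simp only [Pi.smul_apply, birk_apply, smul_eq_mul, inv_mul_eq_div]

theorem hasRat_of_freq {s : Seq3} {a b c : ℝ} (hc : 0 < c)
    (h0 : Tendsto (fun N => (cnt 0 s N : ℝ) / N) atTop (𝓝 a))
    (h1 : Tendsto (fun N => (cnt 1 s N : ℝ) / N) atTop (𝓝 b))
    (h2 : Tendsto (fun N => (cnt 2 s N : ℝ) / N) atTop (𝓝 c)) : HasRat s (a / c) (b / c) := by
  have key : ∀ f : ℕ → ℝ, (fun N : ℕ => (f N / N) / ((cnt 2 s N : ℝ) / N)) =ᶠ[atTop]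
      fun N => f N / cnt 2 s N := by
    intro f
    filter_upwards [eventually_gt_atTop 0] with N hN
    have : (0:ℝ) < N := by exact_mod_cast hN
    rw [div_div_div_cancel_right₀ this.ne']
  refine ⟨?_, (h0.div h2 hc.ne').congr' (key _), (h1.div h2 hc.ne').congr' (key _)⟩
  have := Tendsto.pos_mul_atTop hc h2 tendsto_natCast_atTop_atTop
  rw [← tendsto_natCast_atTop_iff (R := ℝ)]
  refine this.congr' ?_
  filter_upwards [eventually_gt_atTop 0] with N hN
  have : (0:ℝ) < N := by exact_mod_cast hN
  field_simp

theorem hasFreq_iff_hasRat {α : Fin 3 → ℝ} (hα : α ∈ Delta') (s : Seq3) :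
    hasFreq s α ↔ HasRat s (α 0 / α 2) (α 1 / α 2) := by
  obtain ⟨⟨hnn, hsum⟩, h2⟩ := hα
  constructor
  · intro h
    rw [hasFreq_iff_s14] at h
    exact hasRat_of_freq h2 (h 0) (h 1) (h 2)
  · intro h
    have hN : Tendsto (fun N : ℕ => (N : ℝ) / cnt 2 s N) atTop (𝓝 (1 / α 2)) := by
      have e := (h.h0.add h.h1).add_const 1
      have : α 0 / α 2 + α 1 / α 2 + 1 = 1 / α 2 := by
        field_simp; linarith
      rw [this] at e
      refine e.congr' ?_
      filter_upwards [h.top.eventually_gt_atTop 0] with N hN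
      have hp : (0:ℝ) < cnt 2 s N := by exact_mod_cast hN
      have := cnt_sum s N
      have e : (N : ℝ) = cnt 0 s N + cnt 1 s N + cnt 2 s N := by exact_mod_cast this.symm
      rw [e]; field_simp
    have hne : 1 / α 2 ≠ 0 := by positivity
    have key : ∀ f : ℕ → ℝ, (fun N : ℕ => (f N / cnt 2 s N) / ((N : ℝ) / cnt 2 s N)) =ᶠ[atTop]
        fun N => f N / N := by
      intro f
      filter_upwards [h.top.eventually_gt_atTop 0] with N hN
      have hp : (0:ℝ) < cnt 2 s N := by exact_mod_cast hN
      rw [div_div_div_cancel_right₀ hp.ne']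
    rw [hasFreq_iff_s14]
    intro i
    fin_cases i
    · have := (h.h0.div hN hne).congr' (key _)
      convert this using 2
      simp; field_simp; rfl
    · have := (h.h1.div hN hne).congr' (key _)
      convert this using 2
      simp; field_simp; rfl
    · have := ((tendsto_inv₀ hne).comp hN)
      convert this using 2
      · simp
      · simp

theorem Sb_counts (n N : ℕ) (w : Seq3) : ∃ j, N ≤ (n + 2) * (j + 1) ∧
    (∃ e ≤ n + 2, cnt 0 (Sb n w) N = (n + 1) * cnt 1 w j + n * cnt 2 w j + e) ∧
    (∃ e ≤ n + 2, cnt 1 (Sb n w) N = cnt 0 w j + e) ∧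
    (∃ e ≤ n + 2, cnt 2 (Sb n w) N = cnt 1 w j + cnt 2 w j + e) := by
  induction N using Nat.strong_induction_on generalizing w with
  | _ N ih =>
    have hp := blk_len_pos n (w 0)
    have hle := blk_len_le n (w 0)
    by_cases hl : N < (blk n (w 0)).length
    · refine ⟨0, by omega, ?_, ?_, ?_⟩
      · exact ⟨cnt 0 (Sb n w) N, (cnt_le _ _ _).trans (by omega), by simp [cnt]⟩
      · exact ⟨cnt 1 (Sb n w) N, (cnt_le _ _ _).trans (by omega), by simp [cnt]⟩
      · exact ⟨cnt 2 (Sb n w) N, (cnt_le _ _ _).trans (by omega), by simp [cnt]⟩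
    · obtain ⟨m, rfl⟩ := Nat.exists_eq_add_of_le (not_lt.1 hl)
      obtain ⟨j, hj, ⟨e0, he0, h0⟩, ⟨e1, he1, h1⟩, ⟨e2, he2, h2⟩⟩ := ih m (by omega) (shift w)
      have hc : ∀ a, cnt a w (j + 1) = (if w 0 = a then 1 else 0) + cnt a (shift w) j := by
        intro a
        have := cnt_app a [w 0] (shift w) j
        simp only [app_cons, app_nil, cns_shift] at this
        rw [show j + 1 = [w 0].length + j by simp; omega, this]
        simp [List.count_cons]
      refine ⟨j + 1, ?_, ⟨e0, he0, ?_⟩, ⟨e1, he1, ?_⟩, ⟨e2, he2, ?_⟩⟩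
      · nlinarith
      all_goals
        rw [Sb_eq, cnt_app]
        simp only [hc, h0, h1, h2]
        generalize w 0 = a
        fin_cases a <;> simp [blk, List.count_append, List.count_replicate] <;> ring

theorem Sb_hasRat (n : ℕ) {w : Seq3} {x' y' : ℝ} (hy : 0 ≤ y') (h : HasRat w x' y') :
    HasRat (Sb n w) (((n + 1) * y' + n) / (y' + 1)) (x' / (y' + 1)) := by
  choose j hj h0 h1 h2 using fun N => Sb_counts n N w
  choose e0 he0 h0 using h0
  choose e1 he1 h1 using h1
  choose e2 he2 h2 using h2
  have hjt : Tendsto j atTop atTop := by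
    rw [tendsto_atTop]
    intro b
    filter_upwards [eventually_gt_atTop ((n + 2) * (b + 1))] with N hN
    have := hj N
    by_contra hb
    have : (n + 2) * (j N + 1) ≤ (n + 2) * (b + 1) := Nat.mul_le_mul_left _ (by omega)
    omega
  have hct : Tendsto (fun N => cnt 2 w (j N)) atTop atTop := h.top.comp hjt
  have hctr : Tendsto (fun N => (cnt 2 w (j N) : ℝ)) atTop atTop :=
    tendsto_natCast_atTop_atTop.comp hct
  have herr : ∀ e : ℕ → ℕ, (∀ N, e N ≤ n + 2) →
      Tendsto (fun N => (e N : ℝ) / cnt 2 w (j N)) atTop (𝓝 0) := by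
    intro e he
    have ht : Tendsto (fun N => ((n + 2 : ℕ) : ℝ) / cnt 2 w (j N)) atTop (𝓝 0) :=
      hctr.const_div_atTop _
    refine squeeze_zero (fun N => by positivity) (fun N => ?_) ht
    have : (e N : ℝ) ≤ ((n + 2 : ℕ) : ℝ) := by exact_mod_cast he N
    gcongr
  have a0 := h.h0.comp hjt
  have a1 := h.h1.comp hjt
  have hpos : ∀ᶠ N in atTop, (0:ℝ) < cnt 2 w (j N) := hctr.eventually_gt_atTop 0
  have d2 : Tendsto (fun N => (cnt 2 (Sb n w) N : ℝ) / cnt 2 w (j N)) atTop (𝓝 (y' + 1)) := by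
    have := (a1.add_const 1).add (herr e2 he2)
    rw [add_zero] at this
    refine this.congr' ?_
    filter_upwards [hpos] with N hN
    rw [h2]; push_cast; simp only [Function.comp]; field_simp
  have d1 : Tendsto (fun N => (cnt 1 (Sb n w) N : ℝ) / cnt 2 w (j N)) atTop (𝓝 x') := by
    have := a0.add (herr e1 he1)
    rw [add_zero] at this
    refine this.congr' ?_
    filter_upwards [hpos] with N hN
    rw [h1]; push_cast; simp only [Function.comp]; field_simp
  have d0 : Tendsto (fun N => (cnt 0 (Sb n w) N : ℝ) / cnt 2 w (j N)) atTop
      (𝓝 ((n + 1) * y' + n)) := by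
    have := ((a1.const_mul ((n : ℝ) + 1)).add_const (n : ℝ)).add (herr e0 he0)
    rw [add_zero] at this
    refine this.congr' ?_
    filter_upwards [hpos] with N hN
    rw [h0]; push_cast; simp only [Function.comp]; field_simp
  have hne : y' + 1 ≠ 0 := by positivity
  have key : ∀ f : ℕ → ℝ, (fun N : ℕ => (f N / cnt 2 w (j N)) /
      ((cnt 2 (Sb n w) N : ℝ) / cnt 2 w (j N))) =ᶠ[atTop] fun N => f N / cnt 2 (Sb n w) N := by
    intro f
    filter_upwards [hpos] with N hN
    rw [div_div_div_cancel_right₀ hN.ne']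
  refine ⟨?_, (d0.div d2 hne).congr' (key _), (d1.div d2 hne).congr' (key _)⟩
  refine tendsto_atTop_mono (fun N => ?_) hct
  rw [h2]; omega

theorem hasRat_app (l : List (Fin 3)) {s : Seq3} {x y : ℝ} (h : HasRat s x y) :
    HasRat (app l s) x y := by
  have hctr : Tendsto (fun N => (cnt 2 s N : ℝ)) atTop atTop :=
    tendsto_natCast_atTop_atTop.comp h.top
  have hpos : ∀ᶠ N in atTop, (0:ℝ) < cnt 2 s N := hctr.eventually_gt_atTop 0
  have key : ∀ (a : Fin 3) (z : ℝ), Tendsto (fun N => (cnt a s N : ℝ) / cnt 2 s N) atTop (𝓝 z) →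
      Tendsto (fun N => (cnt a (app l s) N : ℝ) / cnt 2 (app l s) N) atTop (𝓝 z) := by
    intro a z hz
    rw [← tendsto_add_atTop_iff_nat l.length]
    have c1 := (hctr.const_div_atTop (l.count a : ℝ)).add hz
    have c2 := (hctr.const_div_atTop (l.count 2 : ℝ)).add_const 1
    rw [zero_add] at c1 c2
    have := c1.div c2 one_ne_zero
    rw [div_one] at this
    refine this.congr' ?_
    filter_upwards [hpos] with N hN
    simp only [add_comm N, cnt_app]
    push_cast
    simp only [Pi.div_apply]
    field_simp
  refine ⟨?_, key 0 x h.h0, key 1 y h.h1⟩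
  rw [← tendsto_add_atTop_iff_nat l.length]
  refine tendsto_atTop_mono (fun N => ?_) h.top
  rw [add_comm N, cnt_app]; omega

theorem floor_step {θ : ℝ} (h0 : 0 ≤ θ) (h1 : θ ≤ 1) (k : ℕ) :
    ⌊θ * ((k + 1 : ℕ) : ℝ)⌋₊ = ⌊θ * (k : ℝ)⌋₊ ∨
    ⌊θ * ((k + 1 : ℕ) : ℝ)⌋₊ = ⌊θ * (k : ℝ)⌋₊ + 1 := by
  have a : ⌊θ * (k : ℝ)⌋₊ ≤ ⌊θ * ((k + 1 : ℕ) : ℝ)⌋₊ := by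
    apply Nat.floor_mono; push_cast; nlinarith
  have b : ⌊θ * ((k + 1 : ℕ) : ℝ)⌋₊ ≤ ⌊θ * (k : ℝ) + 1⌋₊ := by
    apply Nat.floor_mono; push_cast; nlinarith
  rw [Nat.floor_add_one (by positivity)] at b
  omega

theorem floor_tendsto {θ : ℝ} (h0 : 0 ≤ θ) :
    Tendsto (fun k : ℕ => (⌊θ * (k : ℝ)⌋₊ : ℝ) / k) atTop (𝓝 θ) :=
  (tendsto_nat_floor_mul_div_atTop h0).comp tendsto_natCast_atTop_atTop

theorem exists_seq {x y : ℝ} (hx : 0 ≤ x) (hy : 0 ≤ y) (hxy : 0 < x + y) :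
    ∃ s : Seq3, HasRat s x y ∧ ∃ K, ∀ k, ∃ i < K, s (k + i) ≠ 2 := by
  obtain ⟨θ, hθ⟩ : ∃ θ : ℝ, θ = 1 / (1 + x + y) := ⟨_, rfl⟩
  obtain ⟨η, hη⟩ : ∃ η : ℝ, η = y / (x + y) := ⟨_, rfl⟩
  have hθ0 : 0 < θ := by rw [hθ]; positivity
  have hθ1 : θ < 1 := by rw [hθ, div_lt_one (by positivity)]; linarith
  have hη0 : 0 ≤ η := by rw [hη]; positivity
  have hη1 : η ≤ 1 := by rw [hη, div_le_one hxy]; linarith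
  let A : ℕ → ℕ := fun k => ⌊θ * (k : ℝ)⌋₊
  let B : ℕ → ℕ := fun k => ⌊η * (k : ℝ)⌋₊
  have hA : ∀ k, A (k + 1) = A k ∨ A (k + 1) = A k + 1 := floor_step hθ0.le hθ1.le
  have hB : ∀ k, B (k + 1) = B k ∨ B (k + 1) = B k + 1 := floor_step hη0 hη1
  have hA0 : A 0 = 0 := by simp [A]
  have hB0 : B 0 = 0 := by simp [B]
  have hAle : ∀ k, A k ≤ k := by
    intro k
    induction k with
    | zero => simp [hA0]
    | succ k ih => rcases hA k with h | h <;> omega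
  let s : Seq3 := fun k => if A (k + 1) = A k then
    (if B (k - A k + 1) = B (k - A k) then 0 else 1) else 2
  have c2 : ∀ k, cnt 2 s k = A k := by
    intro k
    induction k with
    | zero => simp [cnt, hA0]
    | succ k ih =>
      rw [cnt_succ, ih]
      by_cases h : A (k + 1) = A k
      · by_cases h' : B (k - A k + 1) = B (k - A k) <;> simp [s, h, h']
      · have := (hA k).resolve_left h
        simp [s, this]
  have c1 : ∀ k, cnt 1 s k = B (k - A k) := by
    intro k
    induction k with
    | zero => simp [cnt, hB0]
    | succ k ih =>
      rw [cnt_succ, ih]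
      by_cases h : A (k + 1) = A k
      · have e : k + 1 - A (k + 1) = k - A k + 1 := by have := hAle k; omega
        rw [e]
        by_cases h' : B (k - A k + 1) = B (k - A k)
        · simp [s, h, h']
        · have := (hB (k - A k)).resolve_left h'
          simp [s, h, this]
      · have := (hA k).resolve_left h
        have e : k + 1 - A (k + 1) = k - A k := by omega
        rw [e]; simp [s, this]
  have t2 : Tendsto (fun N => (cnt 2 s N : ℝ) / N) atTop (𝓝 θ) := by
    simp only [c2]; exact floor_tendsto hθ0.le
  have tm : Tendsto (fun N => ((N - A N : ℕ) : ℝ) / N) atTop (𝓝 (1 - θ)) := by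
    have := (floor_tendsto hθ0.le).const_sub 1
    refine this.congr' ?_
    filter_upwards [eventually_gt_atTop 0] with N hN
    have hN' : (0:ℝ) < N := by exact_mod_cast hN
    rw [Nat.cast_sub (hAle N)]
    field_simp
    rfl
  have tm' : Tendsto (fun N => N - A N) atTop atTop := by
    rw [← tendsto_natCast_atTop_iff (R := ℝ)]
    refine (Tendsto.pos_mul_atTop (by linarith) tm tendsto_natCast_atTop_atTop).congr' ?_
    filter_upwards [eventually_gt_atTop 0] with N hN
    have hN' : (0:ℝ) < N := by exact_mod_cast hN
    field_simp
  have t1 : Tendsto (fun N => (cnt 1 s N : ℝ) / N) atTop (𝓝 (η * (1 - θ))) := by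
    simp only [c1]
    refine (((floor_tendsto hη0).comp tm').mul tm).congr' ?_
    filter_upwards [eventually_gt_atTop 0, tm'.eventually_gt_atTop 0] with N hN hN2
    have hN' : (0:ℝ) < N := by exact_mod_cast hN
    have hN2' : (0:ℝ) < ((N - A N : ℕ) : ℝ) := by exact_mod_cast hN2
    simp only [Function.comp]
    rw [div_mul_div_cancel₀ hN2'.ne']
  have t0 : Tendsto (fun N => (cnt 0 s N : ℝ) / N) atTop (𝓝 (1 - θ - η * (1 - θ))) := by
    refine ((t2.const_sub 1).sub t1).congr' ?_
    filter_upwards [eventually_gt_atTop 0] with N hN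
    have hN' : (0:ℝ) < N := by exact_mod_cast hN
    have e : (cnt 0 s N : ℝ) + cnt 1 s N + cnt 2 s N = N := by exact_mod_cast cnt_sum s N
    field_simp
    linarith
  refine ⟨s, ?_, ?_⟩
  · have := hasRat_of_freq hθ0 t0 t1 t2
    convert this using 1
    · rw [hη, hθ]; field_simp; ring
    · rw [hη, hθ]; field_simp; ring
  · obtain ⟨K, hK⟩ := exists_nat_gt (1 / (1 - θ))
    refine ⟨K, fun k => ?_⟩
    by_contra hc
    push Not at hc
    have h1 : ∀ i ≤ K, A (k + i) = A k + i := by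
      intro i
      induction i with
      | zero => simp
      | succ i ih =>
        intro hi
        have e1 := ih (by omega)
        have e2 := hc i (by omega)
        by_cases h : A (k + i + 1) = A (k + i)
        · exfalso
          by_cases h' : B (k + i - A (k + i) + 1) = B (k + i - A (k + i)) <;> simp [s, h, h'] at e2
        · have := (hA (k + i)).resolve_left h
          rw [← add_assoc, this]; omega
    have h2 := h1 K le_rfl
    have h3 : (A (k + K) : ℝ) ≤ θ * ((k + K : ℕ) : ℝ) := Nat.floor_le (by positivity)
    have h4 : θ * (k : ℝ) < A k + 1 := Nat.lt_floor_add_one _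
    rw [h2] at h3
    push_cast at h3
    rw [div_lt_iff₀ (by linarith)] at hK
    nlinarith

theorem max_nonempty {x y : ℝ} (hx : 0 ≤ x) (hy : 0 ≤ y) : ∃ w ∈ MaxSet, HasRat w x y := by
  rcases (add_nonneg hx hy).eq_or_lt with h | h
  · have hx0 : x = 0 := by linarith
    have hy0 : y = 0 := by linarith
    subst hx0 hy0
    have c2 : ∀ N, cnt 2 (fun _ => 2) N = N := by
      intro N; induction N with
      | zero => rfl
      | succ N ih => rw [cnt_succ, ih]; simp
    have c0 : ∀ N, cnt 0 (fun _ => 2) N = 0 := by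
      intro N; have := cnt_sum (fun _ => 2) N; rw [c2] at this; omega
    have c1 : ∀ N, cnt 1 (fun _ => 2) N = 0 := by
      intro N; have := cnt_sum (fun _ => 2) N; rw [c2] at this; omega
    refine ⟨fun _ => 2, ⟨rfl, fun r => Or.inl ?_⟩, ?_, ?_, ?_⟩
    · funext i; rw [shift_iter_apply]
    · exact tendsto_id.congr fun N => (c2 N).symm
    · simp [c0]
    · simp [c1]
  · obtain ⟨s, hs, K, hK⟩ := exists_seq hx hy h
    have hK0 : 0 < K := by obtain ⟨i, hi, _⟩ := hK 0; omega
    refine ⟨app (List.replicate K 2 ++ [0]) s, ⟨?_, fun r => ?_⟩, hasRat_app _ hs⟩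
    · rw [app_lt _ _ _ (by simp)]; simp [List.getElem_append, hK0]
    · set w := app (List.replicate K 2 ++ [0]) s with hw
      have w2 : ∀ i < K, w i = 2 := by
        intro i hi
        rw [hw, app_lt _ _ _ (by simp; omega)]; simp [List.getElem_append, hi]
      have wK : w K = 0 := by
        rw [hw, app_lt _ _ _ (by simp)]; simp
      have ws : ∀ i, w (K + 1 + i) = s i := by
        intro i
        have := app_ge (List.replicate K 2 ++ [0]) s i
        simpa using this
      -- find a non-2 digit soon
      have main : ∀ r, r ≠ 0 → ∃ i < K, w (r + i) ≠ 2 := by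
        intro r hr
        by_cases h : r ≤ K
        · exact ⟨K - r, by omega, by rw [Nat.add_sub_cancel' h, wK]; decide⟩
        · obtain ⟨m, rfl⟩ := Nat.exists_eq_add_of_le (show K + 1 ≤ r by omega)
          obtain ⟨i, hi, h⟩ := hK m
          exact ⟨i, hi, by rw [add_assoc, ws]; exact h⟩
      rcases Nat.eq_zero_or_pos r with rfl | hr
      · exact lexLe_refl _
      · rw [lexLe_iff]
        intro m hm
        obtain ⟨i, hi, h⟩ := main r hr.ne'
        have : m ≤ i := by
          by_contra hmi
          have := hm i (by omega)
          rw [shift_iter_apply, w2 i hi] at this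
          exact h this
        rw [w2 m (by omega)]
        exact Fin.le_last _

theorem cnt_eq_sum (a : Fin 3) (s : Seq3) (N : ℕ) :
    (cnt a s N : ℤ) = ∑ q ∈ Finset.range N, if s q = a then (1 : ℤ) else 0 := by
  induction N with
  | zero => simp [cnt]
  | succ N ih => rw [cnt_succ, Finset.sum_range_succ, ← ih]; push_cast; rfl

theorem exists_pos (s : Seq3) (h : Tendsto (cnt 2 s) atTop atTop) :
    ∃ p : ℕ → ℕ, StrictMono p ∧ (∀ j, s (p j) ≠ 0) ∧ ∀ q, s q ≠ 0 → ∃ j, p j = q := by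
  classical
  have hinf : {q | s q ≠ 0}.Infinite := by
    rw [← Nat.frequently_atTop_iff_infinite]
    intro hc
    simp only [not_not] at hc
    obtain ⟨B, hB⟩ := eventually_atTop.1 hc
    have hconst : ∀ m, cnt 2 s (B + m) = cnt 2 s B := by
      intro m
      induction m with
      | zero => rfl
      | succ m ih => rw [← add_assoc, cnt_succ, ih, hB (B + m) (by omega)]; simp
    obtain ⟨C, hC⟩ := eventually_atTop.1 (h.eventually_gt_atTop (cnt 2 s B))
    have := hC (B + C) (by omega)
    rw [hconst] at this
    omega
  refine ⟨Nat.nth (fun q => s q ≠ 0), Nat.nth_strictMono hinf, fun j => ?_, fun q hq => ?_⟩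
  · exact Nat.nth_mem_of_infinite hinf j
  · exact ⟨_, Nat.nth_count (p := fun q => s q ≠ 0) hq⟩

theorem sum_pos_eq {s : Seq3} {p : ℕ → ℕ} (hp : StrictMono p)
    (hs : ∀ q, s q ≠ 0 → ∃ j, p j = q) (f : ℕ → ℤ) (hf : ∀ q, s q = 0 → f q = 0) (N : ℕ) :
    ∑ j ∈ Finset.range N, f (p j) = ∑ q ∈ Finset.range (p N), f q := by
  classical
  rw [← Finset.sum_image (s := Finset.range N) (g := p) (f := f) (fun a _ b _ h => hp.injective h)]
  apply Finset.sum_subset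
  · intro q hq
    simp only [Finset.mem_image, Finset.mem_range] at hq ⊢
    obtain ⟨j, hj, rfl⟩ := hq
    exact hp hj
  · intro q hq hq'
    apply hf
    by_contra h
    obtain ⟨j, rfl⟩ := hs q h
    apply hq'
    simp only [Finset.mem_image, Finset.mem_range] at hq ⊢
    exact ⟨j, hp.lt_iff_lt.1 hq, rfl⟩

theorem next_pos {s : Seq3} {p : ℕ → ℕ} (hp : StrictMono p) (h0 : ∀ j, s (p j) ≠ 0)
    (hs : ∀ q, s q ≠ 0 → ∃ j, p j = q) {j q : ℕ} (hlt : p j < q) (hq : s q ≠ 0)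
    (hz : ∀ i, p j < i → i < q → s i = 0) : p (j + 1) = q := by
  obtain ⟨k, rfl⟩ := hs q hq
  have h1 : j < k := hp.lt_iff_lt.1 hlt
  by_cases h : j + 1 = k
  · rw [h]
  · exact absurd (hz (p (j + 1)) (hp (by omega)) (hp (by omega))) (h0 _)

def Gw (n : ℕ) (s : Seq3) (N : ℕ) : ℤ := (cnt 0 s N : ℤ) - (n + 1) * cnt 2 s N

def Rc (n : ℕ) (s : Seq3) (p : ℕ) : Prop := ∀ q, p < q → Gw n s q < Gw n s p

theorem Gw_zero {n : ℕ} {s : Seq3} {p : ℕ} (h : s p = 0) : Gw n s (p + 1) = Gw n s p + 1 := by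
  simp [Gw, cnt_succ, h]; ring
theorem Gw_one {n : ℕ} {s : Seq3} {p : ℕ} (h : s p = 1) : Gw n s (p + 1) = Gw n s p := by
  simp [Gw, cnt_succ, h]
theorem Gw_two {n : ℕ} {s : Seq3} {p : ℕ} (h : s p = 2) :
    Gw n s (p + 1) = Gw n s p - (n + 1) := by
  simp [Gw, cnt_succ, h]; ring

def Zs (n : ℕ) (s : Seq3) : Prop := ∀ p, s p = 2 → ∀ i, i < n → s (p + 1 + i) = 0

theorem Gw_block {n : ℕ} {s : Seq3} (hz : Zs n s) {p : ℕ} (h : s p = 2) :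
    Gw n s (p + 1 + n) = Gw n s p - 1 := by
  have : ∀ i ≤ n, Gw n s (p + 1 + i) = Gw n s p - (n + 1) + i := by
    intro i
    induction i with
    | zero => intro _; simp [Gw_two h]
    | succ i ih =>
      intro hi
      rw [← add_assoc, Gw_zero (hz p h i (by omega)), ih (by omega)]; push_cast; ring
  rw [this n le_rfl]; ring

theorem Rc_two {n : ℕ} {s : Seq3} {p : ℕ} (h : Rc n s p) : s p = 2 := by
  have h1 := h (p + 1) (by omega)
  have hc : s p = 0 ∨ s p = 1 ∨ s p = 2 := by omega
  rcases hc with h0 | h0 | h0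
  · rw [Gw_zero h0] at h1; omega
  · rw [Gw_one h0] at h1; omega
  · exact h0

open Classical in
noncomputable def tseq (n : ℕ) (s : Seq3) (p : ℕ → ℕ) : Seq3 := fun j =>
  if s (p j) = 1 then 0 else if Rc n s (p j) then 2 else 1

theorem shift_block {s : Seq3} {q : ℕ} (l : List (Fin 3))
    (h : ∀ i (hi : i < l.length), s (q + i) = l[i]) :
    shift^[q] s = app l (shift^[q + l.length] s) := by
  have : Pre l (shift^[q] s) := by
    rw [pre_iff]; intro i hi; rw [shift_iter_apply]; exact h i hi
  obtain ⟨t, ht⟩ := this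
  rw [ht, add_comm, Function.iterate_add_apply, ht, shift_iter_app]

theorem tseq_le {n : ℕ} {s : Seq3} (hz : Zs n s) {p : ℕ → ℕ} (hp : StrictMono p)
    (h0 : ∀ j, s (p j) ≠ 0) (hs : ∀ q, s q ≠ 0 → ∃ j, p j = q) (j : ℕ)
    (hj : ∀ M, p j ≤ M → Gw n s M ≤ Gw n s (p j)) :
    lexLe (Sb n (shift^[j] (tseq n s p))) (shift^[p j] s) := by
  set t := tseq n s p with ht
  refine lexLe_coind (fun a b => ∃ j, (∀ M, p j ≤ M → Gw n s M ≤ Gw n s (p j)) ∧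
    a = Sb n (shift^[j] t) ∧ b = shift^[p j] s) ?_ ⟨j, hj, rfl, rfl⟩
  rintro a b ⟨j, hj, rfl, rfl⟩
  have hsb : Sb n (shift^[j] t) = app (blk n (t j)) (Sb n (shift^[j + 1] t)) := by
    rw [Sb_eq, ← Function.iterate_succ_apply' shift j t, shift_iter_apply]; rfl
  rw [hsb]
  have hc : s (p j) = 1 ∨ s (p j) = 2 := by have := h0 j; omega
  rcases hc with h1 | h2
  · have htj : t j = 0 := by simp [ht, tseq, h1]
    have hne : s (p j + 1) ≠ 0 := by
      intro h
      have := hj (p j + 1 + 1) (by omega)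
      rw [Gw_zero h, Gw_one h1] at this
      omega
    have hn : p (j + 1) = p j + 1 := next_pos hp h0 hs (by omega) hne (fun i _ _ => by omega)
    refine ⟨1, [], _, _, by rw [htj]; rfl, ?_, Or.inl ⟨j + 1, ?_, rfl, rfl⟩⟩
    · rw [hn]
      have := shift_block (s := s) (q := p j) [1] (fun i hi => by
        have : i = 0 := by simpa using hi
        subst this; simpa using h1)
      simpa using this
    · intro M hM
      rw [hn, Gw_one h1]
      exact hj M (by omega)
  · have hG := Gw_block hz h2
    have hb : ∀ i (hi : i < (2 :: List.replicate n (0 : Fin 3)).length),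
        s (p j + i) = (2 :: List.replicate n 0)[i] := by
      intro i hi
      cases i with
      | zero => simpa using h2
      | succ i =>
        have := hz (p j) h2 i (by simpa using hi)
        rw [show p j + (i + 1) = p j + 1 + i by omega, this]; simp
    have hb1 := shift_block _ hb
    rw [show p j + (2 :: List.replicate n (0 : Fin 3)).length = p j + 1 + n by simp; omega] at hb1
    by_cases h3 : s (p j + 1 + n) = 0
    · have hG2 : Gw n s (p j + 1 + n + 1) = Gw n s (p j) := by rw [Gw_zero h3, hG]; omega
      have hnr : ¬ Rc n s (p j) := by
        intro h
        have := h (p j + 1 + n + 1) (by omega)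
        omega
      have htj : t j = 1 := by simp [ht, tseq, h2, hnr]
      have hne : s (p j + 1 + n + 1) ≠ 0 := by
        intro h
        have := hj (p j + 1 + n + 1 + 1) (by omega)
        rw [Gw_zero h, hG2] at this
        omega
      have hn : p (j + 1) = p j + 1 + n + 1 := by
        refine next_pos hp h0 hs (by omega) hne (fun i h5 h6 => ?_)
        by_cases h7 : i = p j + 1 + n
        · rw [h7, h3]
        · have := hz (p j) h2 (i - (p j + 1)) (by omega)
          rwa [Nat.add_sub_cancel' (by omega)] at this
      refine ⟨2, List.replicate n 0 ++ [0], _, _, by rw [htj]; rfl, ?_,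
        Or.inl ⟨j + 1, ?_, rfl, rfl⟩⟩
      · rw [hb1, hn, ← List.cons_append, app_append]
        congr 1
        have := shift_block (s := s) (q := p j + 1 + n) [0] (fun i hi => by
          have : i = 0 := by simpa using hi
          subst this; simpa using h3)
        simpa using this
      · intro M hM
        rw [hn, hG2]
        exact hj M (by omega)
    · have hn : p (j + 1) = p j + 1 + n := by
        refine next_pos hp h0 hs (by omega) h3 (fun i h5 h6 => ?_)
        have := hz (p j) h2 (i - (p j + 1)) (by omega)
        rwa [Nat.add_sub_cancel' (by omega)] at this
      by_cases hr : Rc n s (p j)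
      · have htj : t j = 2 := by simp [ht, tseq, h2, hr]
        refine ⟨2, List.replicate n 0, _, _, by rw [htj]; rfl, ?_,
          Or.inl ⟨j + 1, ?_, rfl, rfl⟩⟩
        · rw [hb1, hn]
        · intro M hM
          rw [hn, hG]
          have := hr M (by omega)
          omega
      · have htj : t j = 1 := by simp [ht, tseq, h2, hr]
        refine ⟨2, List.replicate n 0, cns 0 (Sb n (shift^[j + 1] t)), _, ?_, hb1, Or.inr ?_⟩
        · rw [htj]; simp [blk, app_append]
        · apply lexLe_of_head
          rw [shift_iter_apply]; simp only [cns_zero, add_zero]; omega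

open Classical in
theorem Rc_count {n : ℕ} {s : Seq3} (hz : Zs n s) {x y : ℝ} (h : HasRat s x y) (hx : x < n + 1) :
    Tendsto (fun N => ((∑ q ∈ Finset.range N, if Rc n s q then (1 : ℤ) else 0 : ℤ) : ℝ) / cnt 2 s N)
      atTop (𝓝 (n + 1 - x)) := by
  have hctr : Tendsto (fun N => (cnt 2 s N : ℝ)) atTop atTop :=
    tendsto_natCast_atTop_atTop.comp h.top
  have hpos : ∀ᶠ N in atTop, (0:ℝ) < cnt 2 s N := hctr.eventually_gt_atTop 0
  have hG : Tendsto (fun N => (Gw n s N : ℝ) / cnt 2 s N) atTop (𝓝 (x - (n + 1))) := by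
    refine (h.h0.sub_const ((n : ℝ) + 1)).congr' ?_
    filter_upwards [hpos] with N hN
    simp only [Gw]; push_cast; field_simp
  have hGbot : Tendsto (fun N => (Gw n s N : ℝ)) atTop atBot := by
    refine (Tendsto.neg_mul_atTop (by linarith) hG hctr).congr' ?_
    filter_upwards [hpos] with N hN
    field_simp
  -- max
  have hmax : ∀ N, ∃ M, N ≤ M ∧ ∀ M', N ≤ M' → Gw n s M' ≤ Gw n s M := by
    intro N
    obtain ⟨K, hK⟩ := eventually_atTop.1 (hGbot.eventually_lt_atBot (Gw n s N : ℝ))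
    obtain ⟨M, hM, hM2⟩ := Finset.exists_max_image (Finset.Icc N (max N K)) (Gw n s)
      ⟨N, by simp⟩
    simp only [Finset.mem_Icc] at hM hM2
    refine ⟨M, hM.1, fun M' h' => ?_⟩
    by_cases hk : M' ≤ max N K
    · exact hM2 M' ⟨h', hk⟩
    · have h1 : Gw n s M' < Gw n s N := by exact_mod_cast hK M' (by omega)
      exact h1.le.trans (hM2 N ⟨le_rfl, le_max_left _ _⟩)
  choose μ hμ1 hμ2 using hmax
  have hstep : ∀ N, Gw n s (μ (N + 1)) = Gw n s (μ N) - if Rc n s N then 1 else 0 := by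
    intro N
    have a1 := hμ2 N (μ (N + 1)) (by have := hμ1 (N + 1); omega)
    have a2 := hμ2 N N le_rfl
    by_cases hr : Rc n s N
    · have b1 := hμ2 (N + 1) (N + 1 + n) (by omega)
      rw [Gw_block hz (Rc_two hr)] at b1
      have b2 := hr (μ (N + 1)) (by have := hμ1 (N + 1); omega)
      have b3 : μ N = N := by
        by_contra hne
        have := hr (μ N) (by have := hμ1 N; omega)
        omega
      rw [b3]; simp only [hr, if_true]; omega
    · simp only [hr, if_false, sub_zero]
      refine le_antisymm a1 ?_
      have hr' := hr
      unfold Rc at hr'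
      push Not at hr'
      obtain ⟨q, hq, hq2⟩ := hr'
      by_cases hN : μ N = N
      · rw [hN]; exact hq2.trans (hμ2 (N + 1) q hq)
      · exact hμ2 (N + 1) (μ N) (by have := hμ1 N; omega)
  have hsum : ∀ N, (∑ q ∈ Finset.range N, if Rc n s q then (1 : ℤ) else 0) =
      Gw n s (μ 0) - Gw n s (μ N) := by
    intro N
    induction N with
    | zero => simp
    | succ N ih => rw [Finset.sum_range_succ, ih, hstep]; ring
  have hR : Tendsto (fun N => (Gw n s (μ N) : ℝ) / cnt 2 s N) atTop (𝓝 (x - (n + 1))) := by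
    rw [tendsto_order]
    constructor
    · intro a ha
      filter_upwards [(tendsto_order.1 hG).1 a ha, hpos] with N hN hN2
      refine hN.trans_le ?_
      have : (Gw n s N : ℝ) ≤ Gw n s (μ N) := by exact_mod_cast hμ2 N N le_rfl
      gcongr
    · intro a ha
      obtain ⟨b, hb1, hb2⟩ := exists_between (lt_min ha (show x - (n + 1) < 0 by linarith))
      have hba := hb2.trans_le (min_le_left _ _)
      have hb0 := hb2.trans_le (min_le_right _ _)
      obtain ⟨K, hK⟩ := eventually_atTop.1 (((tendsto_order.1 hG).2 b hb1).and hpos)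
      filter_upwards [eventually_ge_atTop K, hpos] with N hN hN2
      obtain ⟨c1, c2⟩ := hK (μ N) (hN.trans (hμ1 N))
      rw [div_lt_iff₀ c2] at c1
      refine lt_of_le_of_lt ?_ hba
      rw [div_le_iff₀ hN2]
      have : (cnt 2 s N : ℝ) ≤ cnt 2 s (μ N) := by exact_mod_cast cnt_mono 2 s (hμ1 N)
      nlinarith
  have := (hctr.const_div_atTop (Gw n s (μ 0) : ℝ)).sub hR
  rw [show (0:ℝ) - (x - (n + 1)) = n + 1 - x by ring] at this
  refine this.congr fun N => ?_
  rw [hsum]; push_cast; ring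

theorem tseq_hasRat {n : ℕ} {s : Seq3} (hz : Zs n s) {x y : ℝ} (h : HasRat s x y)
    (hx : x < n + 1) {p : ℕ → ℕ} (hp : StrictMono p)
    (h0 : ∀ j, s (p j) ≠ 0) (hs : ∀ q, s q ≠ 0 → ∃ j, p j = q) :
    HasRat (tseq n s p) (y / (n + 1 - x)) ((x - n) / (n + 1 - x)) := by
  classical
  have hpt : Tendsto p atTop atTop := hp.tendsto_atTop
  have hctr : Tendsto (fun N => (cnt 2 s (p N) : ℝ)) atTop atTop :=
    tendsto_natCast_atTop_atTop.comp (h.top.comp hpt)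
  have hpos : ∀ᶠ N in atTop, (0:ℝ) < cnt 2 s (p N) := hctr.eventually_gt_atTop 0
  have k2 : ∀ N, (cnt 2 (tseq n s p) N : ℤ) =
      ∑ q ∈ Finset.range (p N), if Rc n s q then (1 : ℤ) else 0 := by
    intro N
    rw [cnt_eq_sum, ← sum_pos_eq hp hs]
    · refine Finset.sum_congr rfl fun j _ => ?_
      by_cases h1 : s (p j) = 1
      · have : ¬ Rc n s (p j) := fun hr => by have := Rc_two hr; omega
        simp [tseq, h1, this]
      · by_cases hr : Rc n s (p j) <;> simp [tseq, h1, hr]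
    · intro q hq
      have : ¬ Rc n s q := fun hr => by have := Rc_two hr; omega
      simp [this]
  have k0 : ∀ N, (cnt 0 (tseq n s p) N : ℤ) = cnt 1 s (p N) := by
    intro N
    rw [cnt_eq_sum, cnt_eq_sum, ← sum_pos_eq hp hs]
    · refine Finset.sum_congr rfl fun j _ => ?_
      by_cases h1 : s (p j) = 1
      · simp [tseq, h1]
      · by_cases hr : Rc n s (p j) <;> simp [tseq, h1, hr]
    · intro q hq; simp [hq]
  have k1 : ∀ N, (cnt 1 (tseq n s p) N : ℤ) + cnt 2 (tseq n s p) N = cnt 2 s (p N) := by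
    intro N
    rw [cnt_eq_sum, cnt_eq_sum, cnt_eq_sum, ← Finset.sum_add_distrib, ← sum_pos_eq hp hs]
    · refine Finset.sum_congr rfl fun j _ => ?_
      by_cases h1 : s (p j) = 1
      · simp [tseq, h1]
      · have h2 : s (p j) = 2 := by have := h0 j; omega
        by_cases hr : Rc n s (p j) <;> simp [tseq, h2, hr]
    · intro q hq; simp [hq]
  have hc : 0 < n + 1 - x := by linarith
  have d2 : Tendsto (fun N => (cnt 2 (tseq n s p) N : ℝ) / cnt 2 s (p N)) atTop
      (𝓝 (n + 1 - x)) := by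
    refine ((Rc_count hz h hx).comp hpt).congr fun N => ?_
    simp only [Function.comp]
    rw [← k2]; push_cast; rfl
  have d0 : Tendsto (fun N => (cnt 0 (tseq n s p) N : ℝ) / cnt 2 s (p N)) atTop (𝓝 y) := by
    refine (h.h1.comp hpt).congr fun N => ?_
    simp only [Function.comp]
    have : (cnt 0 (tseq n s p) N : ℝ) = cnt 1 s (p N) := by exact_mod_cast k0 N
    rw [this]
  have d1 : Tendsto (fun N => (cnt 1 (tseq n s p) N : ℝ) / cnt 2 s (p N)) atTop (𝓝 (x - n)) := by
    have := d2.const_sub 1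
    rw [show 1 - (n + 1 - x) = x - n by ring] at this
    refine this.congr' ?_
    filter_upwards [hpos] with N hN
    have e : (cnt 1 (tseq n s p) N : ℝ) + cnt 2 (tseq n s p) N = cnt 2 s (p N) := by
      exact_mod_cast k1 N
    field_simp
    linarith
  have key : ∀ f : ℕ → ℝ, (fun N : ℕ => (f N / cnt 2 s (p N)) /
      ((cnt 2 (tseq n s p) N : ℝ) / cnt 2 s (p N))) =ᶠ[atTop]
      fun N => f N / cnt 2 (tseq n s p) N := by
    intro f
    filter_upwards [hpos] with N hN
    rw [div_div_div_cancel_right₀ hN.ne']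
  refine ⟨?_, (d0.div d2 hc.ne').congr' (key _), (d1.div d2 hc.ne').congr' (key _)⟩
  rw [← tendsto_natCast_atTop_iff (R := ℝ)]
  refine (Tendsto.pos_mul_atTop hc d2 hctr).congr' ?_
  filter_upwards [hpos] with N hN
  field_simp

theorem two_get (m i : ℕ) (hi : i < (2 :: List.replicate m (2 : Fin 3)).length) :
    2 = (2 :: List.replicate m (2 : Fin 3))[i] := by
  cases i <;> simp


noncomputable def nx (x : ℝ) : ℕ := ⌊x⌋₊
noncomputable def xx (x y : ℝ) : ℝ := y / (nx x + 1 - x)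
noncomputable def yy (x : ℝ) : ℝ := (x - nx x) / (nx x + 1 - x)

theorem nx_lt (x : ℝ) : x < nx x + 1 := Nat.lt_floor_add_one x
theorem nx_le {x : ℝ} (hx : 0 ≤ x) : (nx x : ℝ) ≤ x := Nat.floor_le hx
theorem xx_nonneg {x y : ℝ} (hy : 0 ≤ y) : 0 ≤ xx x y :=
  div_nonneg hy (by have := nx_lt x; linarith)
theorem yy_nonneg {x : ℝ} (hx : 0 ≤ x) : 0 ≤ yy x :=
  div_nonneg (by have := nx_le hx; linarith) (by have := nx_lt x; linarith)

inductive Good : ℝ → ℝ → List (Fin 3) → Prop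
  | base (x y : ℝ) : Good x y [2]
  | term (m : ℕ) : Good 0 0 (2 :: List.replicate m 2)
  | step (x y : ℝ) (P : List (Fin 3)) (h : Good (xx x y) (yy x) P) : Good x y (Lb (nx x) P)

theorem Good.head {x y : ℝ} {P : List (Fin 3)} (h : Good x y P) : ∃ Q, P = 2 :: Q := by
  induction h with
  | base x y => exact ⟨_, rfl⟩
  | term m => exact ⟨_, rfl⟩
  | step x y P h ih =>
    obtain ⟨Q, rfl⟩ := ih
    exact ⟨List.replicate (nx x) 0 ++ Lb (nx x) Q, by simp [Lb, blk]⟩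

theorem Good.upper {x y : ℝ} {P : List (Fin 3)} (h : Good x y P) (hx : 0 ≤ x) (hy : 0 ≤ y) :
    ∃ w ∈ MaxSet, HasRat w x y ∧ Pre P w := by
  induction h with
  | base x y =>
    obtain ⟨w, hw, hr⟩ := max_nonempty hx hy
    exact ⟨w, hw, hr, shift w, by rw [app_cons, app_nil, ← hw.1, cns_shift]⟩
  | term m =>
    have hc : ∀ l, (l = 0 ∨ l = 1) → ∀ N, cnt l (fun _ => 2) N = 0 := by
      intro l hl N
      induction N with
      | zero => rfl
      | succ N ih => rw [cnt_succ, ih]; rcases hl with rfl | rfl <;> simp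
    have c0 := hc 0 (Or.inl rfl)
    have c1 := hc 1 (Or.inr rfl)
    have c2 : ∀ N, cnt 2 (fun _ => 2) N = N := by
      intro N; have := cnt_sum (fun _ => 2) N; rw [c0, c1] at this; omega
    refine ⟨fun _ => 2, ⟨rfl, fun r => Or.inl ?_⟩, ⟨?_, ?_, ?_⟩, ?_⟩
    · funext i; rw [shift_iter_apply]
    · exact tendsto_id.congr fun N => (c2 N).symm
    · simp [c0]
    · simp [c1]
    · rw [pre_iff]; intro i hi
      exact two_get _ _ hi
  | step x y P h ih =>
    obtain ⟨w, hw, hr, t, rfl⟩ := ih (xx_nonneg hy) (yy_nonneg hx)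
    refine ⟨Sb (nx x) (app P t), Sb_max _ hw, ?_, _, Sb_app _ _ _⟩
    have h1 := nx_lt x
    have hc : (0:ℝ) < nx x + 1 - x := by linarith
    have := Sb_hasRat (nx x) (yy_nonneg hx) hr
    have e : yy x + 1 = 1 / (nx x + 1 - x) := by unfold yy; field_simp; ring
    rw [e] at this
    convert this using 1
    · unfold yy; field_simp; ring
    · unfold xx; field_simp

theorem run_two {s : Seq3} (h : HasRat s 0 0) (m : ℕ) : ∃ r, ∀ i < m, s (r + i) = 2 := by
  by_contra hc
  push Not at hc
  have key : ∀ k, k ≤ cnt 0 s (k * m) + cnt 1 s (k * m) := by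
    intro k
    induction k with
    | zero => simp
    | succ k ih =>
      obtain ⟨i, hi, hne⟩ := hc (k * m)
      have h1 : cnt 0 s (k * m) + cnt 1 s (k * m) + 1 ≤
          cnt 0 s (k * m + i + 1) + cnt 1 s (k * m + i + 1) := by
        have a0 := cnt_mono 0 s (show k * m ≤ k * m + i by omega)
        have a1 := cnt_mono 1 s (show k * m ≤ k * m + i by omega)
        have hcase : s (k * m + i) = 0 ∨ s (k * m + i) = 1 := by omega
        rw [cnt_succ, cnt_succ]
        rcases hcase with e | e <;> rw [e] <;> simp <;> omega
      have hle : k * m + i + 1 ≤ (k + 1) * m := by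
        rw [add_mul, one_mul]; omega
      have b0 := cnt_mono 0 s hle
      have b1 := cnt_mono 1 s hle
      omega
  have hm : 0 < m := by
    by_contra h0
    obtain ⟨i, hi, _⟩ := hc 0
    omega
  have ht := h.h0.add h.h1
  rw [add_zero] at ht
  have hpos := h.top.eventually_gt_atTop 0
  have hev := ((tendsto_order.1 ht).2 (1 / (m : ℝ)) (by positivity)).and hpos
  obtain ⟨K, hK⟩ := eventually_atTop.1 hev
  obtain ⟨e1, e2⟩ := hK (K * m) (Nat.le_mul_of_pos_right _ hm)
  have e2' : (0:ℝ) < cnt 2 s (K * m) := by exact_mod_cast e2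
  have hm' : (0:ℝ) < m := by exact_mod_cast hm
  rw [← add_div, div_lt_div_iff₀ e2' hm'] at e1
  have k1 := key K
  have k2 := cnt_le 2 s (K * m)
  have k1' : (K : ℝ) ≤ cnt 0 s (K * m) + cnt 1 s (K * m) := by exact_mod_cast k1
  have k2' : (cnt 2 s (K * m) : ℝ) ≤ K * m := by exact_mod_cast k2
  nlinarith

theorem Good.lower {x y : ℝ} {P : List (Fin 3)} (h : Good x y P) {s : Seq3} (hs : HasRat s x y) :
    ∃ r, lexLe (app P fun _ => 0) (shift^[r] s) := by
  induction h generalizing s with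
  | base x y =>
    have : ∃ r, s r = 2 := by
      by_contra hc
      push Not at hc
      have h0 : ∀ N, cnt 2 s N = 0 := by
        intro N
        induction N with
        | zero => rfl
        | succ N ih => rw [cnt_succ, ih]; simp [hc N]
      obtain ⟨N, hN⟩ := (hs.top.eventually_gt_atTop 0).exists
      rw [h0] at hN; omega
    obtain ⟨r, hr⟩ := this
    refine ⟨r, ?_⟩
    have e := shift_block (s := s) (q := r) [2] (fun i hi => by
      have : i = 0 := by simpa using hi
      subst this; simpa using hr)
    rw [e, lexLe_app]; exact lexLe_zero _
  | term m =>
    obtain ⟨r, hr⟩ := run_two hs (m + 1)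
    refine ⟨r, ?_⟩
    have e := shift_block (s := s) (q := r) (2 :: List.replicate m 2) (fun i hi => by
      rw [hr i (by simpa using hi)]; exact two_get _ _ hi)
    rw [e, lexLe_app]; exact lexLe_zero _
  | step x y P h ih =>
    by_cases hz : Zs (nx x) s
    · obtain ⟨p, hp, h0, hsur⟩ := exists_pos s hs.top
      obtain ⟨r, hr⟩ := ih (tseq_hasRat hz hs (nx_lt x) hp h0 hsur)
      obtain ⟨Q, rfl⟩ := h.head
      have ht : tseq (nx x) s p r = 2 := by
        have := (lexLe_iff _ _).1 hr 0 (fun i hi => by omega)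
        rw [shift_iter_apply] at this
        simp at this
        omega
      have hrc : Rc (nx x) s (p r) := by
        by_contra hn
        by_cases h1 : s (p r) = 1 <;> simp [tseq, h1, hn] at ht
      refine ⟨p r, lexLe_trans (lexLe_trans ?_ (Sb_mono (nx x) hr)) (tseq_le hz hp h0 hsur r ?_)⟩
      · rw [Sb_app, lexLe_app]; exact lexLe_zero _
      · intro M hM
        rcases hM.eq_or_lt with e | e
        · rw [e]
        · exact (hrc M e).le
    · unfold Zs at hz
      push Not at hz
      obtain ⟨q, hq, i, hi, hne⟩ := hz
      obtain ⟨Q, rfl⟩ := h.head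
      refine ⟨q, ?_⟩
      rw [lexLe_iff]
      intro m hm
      have hd : ∀ k, k < nx x → app (Lb (nx x) (2 :: Q)) (fun _ => 0) (k + 1) = 0 := by
        intro k hk
        have e : Lb (nx x) (2 :: Q) = (2 :: List.replicate (nx x) 0) ++ Lb (nx x) Q := by
          simp [Lb, blk]
        rw [e, app_append, app_lt _ _ _ (by simpa using hk)]; simp
      have hmi : m ≤ i + 1 := by
        by_contra hlt
        have := hm (i + 1) (by omega)
        rw [hd i hi, shift_iter_apply, show q + (i + 1) = q + 1 + i by omega] at this
        exact hne this.symm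
      cases m with
      | zero => rw [shift_iter_apply, add_zero, hq]; exact Fin.le_last _
      | succ m => rw [hd m (by omega)]; exact Fin.zero_le _

theorem Good.pre {α : Fin 3 → ℝ} (hα : α ∈ Delta') {I : Seq3} (hI : IsInfimax α I)
    {P : List (Fin 3)} (h : Good (α 0 / α 2) (α 1 / α 2) P) : Pre P I := by
  obtain ⟨-, hM, hle, hglb⟩ := hI
  have hx : 0 ≤ α 0 / α 2 := div_nonneg (hα.1.1 0) hα.2.le
  have hy : 0 ≤ α 1 / α 2 := div_nonneg (hα.1.1 1) hα.2.le
  obtain ⟨w, hw, hr, t, rfl⟩ := h.upper hx hy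
  refine pre_of_sandwich (hglb _ ?_) (hle _ ⟨hw, (hasFreq_iff_hasRat hα _).2 hr⟩)
  rintro v ⟨hv, hf⟩
  obtain ⟨r, hr⟩ := h.lower ((hasFreq_iff_hasRat hα _).1 hf)
  exact lexLe_trans hr (hv.2 r)

theorem descend (F : ℕ → ℝ → ℝ → Prop)
    (h1 : ∀ x y, 0 ≤ x → 0 ≤ y → F 1 x y) (hterm : ∀ m, F m 0 0)
    (hstep : ∀ m x y, 0 ≤ x → 0 ≤ y → F m (xx x y) (yy x) → F m x y)
    (hstep1 : ∀ m x y, 0 ≤ x → 0 ≤ y → 1 ≤ m → nx x ≠ 0 → F m (xx x y) (yy x) → F (m + 1) x y)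
    (m : ℕ) (hm : 1 ≤ m) : ∀ x y, 0 ≤ x → 0 ≤ y → F m x y := by
  induction m, hm using Nat.le_induction with
  | base => exact h1
  | succ m hm ih =>
    have up : ∀ x y, 0 ≤ x → 0 ≤ y → nx x ≠ 0 → F (m + 1) x y := fun x y hx hy hn =>
      hstep1 m x y hx hy hm hn (ih _ _ (xx_nonneg hy) (yy_nonneg hx))
    have main : ∀ b : ℕ, ∀ x y : ℝ, 0 ≤ x → 0 ≤ y → 1 < b * (x + y) → F (m + 1) x y := by
      intro b
      induction b with
      | zero => intro x y _ _ h; simp at h; linarith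
      | succ b ihb =>
        intro x y hx hy hb
        by_cases hn : nx x = 0
        · apply hstep _ _ _ hx hy
          have hx1 := nx_lt x
          have ex : xx x y = y / (1 - x) := by simp [xx, hn]
          have ey : yy x = x / (1 - x) := by simp [yy, hn]
          have hx' := xx_nonneg (x := x) hy
          have hy' := yy_nonneg hx
          rw [hn] at hx1
          have hx2 : 0 < 1 - x := by push_cast at hx1; linarith
          by_cases hn' : nx (xx x y) = 0
          · apply hstep _ _ _ hx' hy'
            have hx3 := nx_lt (xx x y)
            rw [hn', ex, div_lt_iff₀ (by push_cast at *; linarith)] at hx3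
            push_cast at hx3
            have hpos : 0 < 1 - x - y := by linarith
            have hne : 1 - y / (1 - x) ≠ 0 := by
              have : 1 - y / (1 - x) = (1 - x - y) / (1 - x) := by field_simp
              rw [this]; positivity
            have ex2 : xx (xx x y) (yy x) = x / (1 - x - y) := by
              rw [ex, ey] at *
              simp only [xx, hn']; push_cast
              have : (0:ℝ) + 1 - y / (1 - x) = (1 - x - y) / (1 - x) := by field_simp; ring
              rw [this]; field_simp
            have ey2 : yy (xx x y) = y / (1 - x - y) := by
              rw [ex] at *
              simp only [yy, hn']; push_cast
              have : (0:ℝ) + 1 - y / (1 - x) = (1 - x - y) / (1 - x) := by field_simp; ring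
              rw [this]; field_simp; ring
            rw [ex2, ey2]
            apply ihb
            · positivity
            · positivity
            · rw [← add_div, ← mul_div_assoc, lt_div_iff₀ hpos]
              push_cast at hb
              linarith
          · exact up _ _ hx' hy' hn'
        · exact up x y hx hy hn
    intro x y hx hy
    rcases (add_nonneg hx hy).eq_or_lt with h | h
    · have hx0 : x = 0 := by linarith
      have hy0 : y = 0 := by linarith
      subst hx0 hy0
      exact hterm _
    · obtain ⟨b, hb⟩ := exists_nat_gt (1 / (x + y))
      rw [div_lt_iff₀ h] at hb
      exact main b x y hx hy hb

theorem Lb_len (n : ℕ) (P : List (Fin 3)) : P.length ≤ (Lb n P).length := by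
  induction P with
  | nil => simp
  | cons a P ih =>
    have := blk_len_pos n a
    simp [Lb] at *; omega

theorem Lb_len1 {n : ℕ} (hn : n ≠ 0) (P : List (Fin 3)) :
    (2 :: P).length + 1 ≤ (Lb n (2 :: P)).length := by
  have := Lb_len n P
  simp [Lb, blk] at *; omega

theorem good_len (m : ℕ) (hm : 1 ≤ m) :
    ∀ x y, 0 ≤ x → 0 ≤ y → ∃ Q, Good x y Q ∧ m ≤ Q.length := by
  apply descend (fun m x y => ∃ Q, Good x y Q ∧ m ≤ Q.length) _ _ _ _ m hm
  · intro x y _ _; exact ⟨_, Good.base x y, by simp⟩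
  · intro m; exact ⟨_, Good.term m, by simp⟩
  · rintro m x y _ _ ⟨Q, hQ, hl⟩
    exact ⟨_, Good.step x y Q hQ, hl.trans (Lb_len _ _)⟩
  · rintro m x y _ _ _ hn ⟨Q, hQ, hl⟩
    refine ⟨_, Good.step x y Q hQ, ?_⟩
    obtain ⟨P, rfl⟩ := hQ.head
    have := Lb_len1 hn P
    omega

theorem Sb_next (n : ℕ) (r : ℕ) (z : Seq3) :
    ∃ i k, r ≤ k ∧ k < r + (n + 2) ∧ shift^[k] (Sb n z) = Sb n (shift^[i] z) := by
  induction r using Nat.strong_induction_on generalizing z with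
  | _ r ih =>
    have hp := blk_len_pos n (z 0)
    have hle := blk_len_le n (z 0)
    by_cases hl : r < (blk n (z 0)).length
    · rcases Nat.eq_zero_or_pos r with rfl | hr
      · exact ⟨0, 0, le_rfl, by omega, rfl⟩
      · exact ⟨1, (blk n (z 0)).length, by omega, by omega, by rw [shift_Sb_block]; rfl⟩
    · obtain ⟨m, rfl⟩ := Nat.exists_eq_add_of_le (not_lt.1 hl)
      obtain ⟨i, k, h1, h2, h3⟩ := ih m (by omega) (shift z)
      refine ⟨i + 1, k + (blk n (z 0)).length, by omega, by omega, ?_⟩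
      rw [Function.iterate_add_apply, shift_Sb_block, h3, Function.iterate_succ_apply]

theorem Sb_jump (n : ℕ) (j : ℕ) (z : Seq3) :
    ∃ k, k ≤ j * (n + 2) ∧ shift^[k] (Sb n z) = Sb n (shift^[j] z) := by
  induction j generalizing z with
  | zero => exact ⟨0, by simp, rfl⟩
  | succ j ih =>
    obtain ⟨k, h1, h2⟩ := ih (shift z)
    have hle := blk_len_le n (z 0)
    refine ⟨k + (blk n (z 0)).length, by rw [add_mul]; omega, ?_⟩
    rw [Function.iterate_add_apply, shift_Sb_block, h2, Function.iterate_succ_apply]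

def Rcr (Φ : Seq3 → Prop) (z : Seq3) (L : ℕ) : Prop :=
  ∀ r, ∃ k, r ≤ k ∧ k < r + L ∧ Φ (shift^[k] z)

theorem Rcr_Sb {Φ Ψ : Seq3 → Prop} (n : ℕ) {z : Seq3} {L : ℕ} (h : Rcr Φ z L)
    (hΦ : ∀ u, Φ u → Ψ (Sb n u)) : Rcr Ψ (Sb n z) ((L + 1) * (n + 2)) := by
  intro r
  obtain ⟨i, k, h1, h2, h3⟩ := Sb_next n r z
  obtain ⟨i', a1, a2, a3⟩ := h i
  obtain ⟨k', b1, b2⟩ := Sb_jump n (i' - i) (shift^[i] z)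
  have hle : (i' - i) * (n + 2) ≤ L * (n + 2) := Nat.mul_le_mul_right _ (by omega)
  refine ⟨k' + k, by omega, ?_, ?_⟩
  · rw [add_mul, one_mul]; omega
  · rw [Function.iterate_add_apply, h3, b2, ← Function.iterate_add_apply, Nat.sub_add_cancel a1]
    exact hΦ _ a3

theorem rec_main (m : ℕ) (hm : 1 ≤ m) : ∀ x y, 0 ≤ x → 0 ≤ y →
    ∃ P L, Good x y P ∧ m ≤ P.length ∧ ∀ M, ∃ Q E, Good x y Q ∧ M ≤ Q.length ∧ Pre Q E ∧
      Rcr (Pre P) E L := by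
  apply descend (fun m x y => ∃ P L, Good x y P ∧ m ≤ P.length ∧
    ∀ M, ∃ Q E, Good x y Q ∧ M ≤ Q.length ∧ Pre Q E ∧ Rcr (Pre P) E L) _ _ _ _ m hm
  · intro x y hx hy
    refine ⟨[2], (((1 + 1) * (nx (xx x y) + 2)) + 1) * (nx x + 2), Good.base x y, by simp,
      fun M => ?_⟩
    obtain ⟨Q, hQ, hl⟩ := good_len (M + 1) (by omega) (xx (xx x y) (yy x)) (yy (xx x y))
      (xx_nonneg (yy_nonneg hx)) (yy_nonneg (xx_nonneg hy))
    refine ⟨_, Sb (nx x) (Sb (nx (xx x y)) (app Q fun _ => 0)),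
      Good.step x y _ (Good.step _ _ Q hQ), ?_, ?_, ?_⟩
    · have a1 := Lb_len (nx (xx x y)) Q
      have a2 := Lb_len (nx x) (Lb (nx (xx x y)) Q)
      omega
    · exact ⟨_, by rw [Sb_app, Sb_app]⟩
    · refine Rcr_Sb (Φ := fun u => u 0 ≠ 0) _ (Rcr_Sb (Φ := fun _ => True) _ ?_ ?_) ?_
      · intro r; exact ⟨r, le_rfl, by omega, trivial⟩
      · intro u _; exact Sb_head_ne _ _
      · intro u hu
        have hc : u 0 = 1 ∨ u 0 = 2 := by omega
        rw [pre_iff]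
        intro i hi
        have : i = 0 := by simpa using hi
        subst this
        rw [Sb_eq]
        rcases hc with h | h <;> rw [h] <;> simp [blk]
  · intro m
    refine ⟨_, 1, Good.term m, by simp, fun M => ⟨_, fun _ => 2, Good.term M, by simp, ?_, ?_⟩⟩
    · rw [pre_iff]; intro i hi
      exact two_get _ _ hi
    · intro r
      refine ⟨r, le_rfl, by omega, ?_⟩
      rw [pre_iff]; intro i hi
      rw [shift_iter_apply]; exact two_get _ _ hi
  · rintro m x y hx hy ⟨P, L, hP, hl, h⟩
    refine ⟨_, (L + 1) * (nx x + 2), Good.step x y P hP, hl.trans (Lb_len _ _), fun M => ?_⟩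
    obtain ⟨Q, E, hQ, hlQ, ⟨t, rfl⟩, hr⟩ := h M
    refine ⟨_, Sb (nx x) (app Q t), Good.step x y Q hQ, hlQ.trans (Lb_len _ _),
      ⟨_, Sb_app _ _ _⟩, Rcr_Sb _ hr ?_⟩
    rintro u ⟨v, rfl⟩
    exact ⟨_, Sb_app _ _ _⟩
  · rintro m x y hx hy _ hn ⟨P, L, hP, hl, h⟩
    refine ⟨_, (L + 1) * (nx x + 2), Good.step x y P hP, ?_, fun M => ?_⟩
    · obtain ⟨P', rfl⟩ := hP.head
      have := Lb_len1 hn P'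
      omega
    obtain ⟨Q, E, hQ, hlQ, ⟨t, rfl⟩, hr⟩ := h M
    refine ⟨_, Sb (nx x) (app Q t), Good.step x y Q hQ, hlQ.trans (Lb_len _ _),
      ⟨_, Sb_app _ _ _⟩, Rcr_Sb _ hr ?_⟩
    rintro u ⟨v, rfl⟩
    exact ⟨_, Sb_app _ _ _⟩

theorem infimax_rec {α : Fin 3 → ℝ} (hα : α ∈ Delta') {I : Seq3} (hI : IsInfimax α I) (m : ℕ) :
    ∃ N, 0 < N ∧ ∀ r, ∃ k, r ≤ k ∧ k < r + N ∧ ∀ i < m, I (k + i) = I i := by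
  have hx : 0 ≤ α 0 / α 2 := div_nonneg (hα.1.1 0) hα.2.le
  have hy : 0 ≤ α 1 / α 2 := div_nonneg (hα.1.1 1) hα.2.le
  obtain ⟨P, L, hP, hl, h⟩ := rec_main (m + 1) (by omega) _ _ hx hy
  refine ⟨L + 1, by omega, fun r => ?_⟩
  obtain ⟨Q, E, hQ, hlQ, hpre, hr⟩ := h (r + L + m)
  obtain ⟨k, h1, h2, h3⟩ := hr r
  refine ⟨k, h1, by omega, fun i hi => ?_⟩
  have a1 := (pre_iff _ _).1 (hP.pre hα hI) i (by omega)
  have a2 := (pre_iff _ _).1 (hQ.pre hα hI) (k + i) (by omega)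
  have a3 := (pre_iff _ _).1 hpre (k + i) (by omega)
  have a4 := (pre_iff _ _).1 h3 i (by omega)
  rw [shift_iter_apply] at a4
  rw [a2, ← a3, a4, a1]

theorem nhds_agree {s : Seq3} {U : Set Seq3} (hU : U ∈ nhds s) :
    ∃ m, ∀ t : Seq3, (∀ i < m, t i = s i) → t ∈ U := by
  rw [nhds_pi, Filter.mem_pi] at hU
  obtain ⟨J, hJ, V, hV, hsub⟩ := hU
  obtain ⟨m, hm⟩ := hJ.bddAbove
  refine ⟨m + 1, fun t ht => hsub ?_⟩
  intro i hi
  rw [ht i (by have := hm hi; omega)]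
  exact mem_of_mem_nhds (hV i)

theorem agree_nhds (s : Seq3) (m : ℕ) : {t : Seq3 | ∀ i < m, t i = s i} ∈ nhds s := by
  have : {t : Seq3 | ∀ i < m, t i = s i} = ⋂ i ∈ Finset.range m, {t : Seq3 | t i = s i} := by
    ext t; simp
  rw [this, Filter.biInter_finset_mem]
  intro i _
  have hc : Continuous (fun t : Seq3 => t i) := continuous_apply i
  exact (hc.isOpen_preimage {s i} (isOpen_discrete _)).mem_nhds rfl

theorem continuous_shift3 : Continuous shift :=
  continuous_pi fun n => continuous_apply (n + 1)

theorem closure_orbit_maps (s : Seq3) : Set.MapsTo shift (orbitClosure s) (orbitClosure s) := by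
  refine Set.MapsTo.closure ?_ continuous_shift3
  rintro t ⟨r, rfl⟩
  exact ⟨r + 1, Function.iterate_succ_apply' _ _ _⟩

theorem minimal_of_rec {I : Seq3}
    (h : ∀ m, ∃ N, 0 < N ∧ ∀ r, ∃ k, r ≤ k ∧ k < r + N ∧ ∀ i < m, I (k + i) = I i) :
    ∀ x ∈ orbitClosure I, orbitClosure I ⊆ closure {y | ∃ n : ℕ, shift^[n] x = y} := by
  intro x hx
  have hI : I ∈ orbitClosure x := by
    unfold orbitClosure
    rw [mem_closure_iff_nhds]
    intro U hU
    obtain ⟨m, hm⟩ := nhds_agree hU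
    obtain ⟨N, hN, hr⟩ := h m
    unfold orbitClosure at hx
    rw [mem_closure_iff_nhds] at hx
    obtain ⟨t, ht, r, rfl⟩ := hx _ (agree_nhds x (N + m))
    obtain ⟨k, h1, h2, h3⟩ := hr r
    refine ⟨shift^[k - r] x, hm _ fun i hi => ?_, k - r, rfl⟩
    have := ht (k - r + i) (by omega)
    rw [shift_iter_apply] at this ⊢
    rw [← this, ← h3 i hi]
    congr 1; omega
  refine closure_minimal ?_ isClosed_closure
  rintro t ⟨r, rfl⟩
  exact (closure_orbit_maps x).iterate r hI

/-- For every `α ∈ Δ'`, the infimax sequence `I(α)` is almost periodic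
under the shift (return times to any neighborhood have bounded gaps), and consequently
`C_α`, the closure of its orbit, is a minimal set: every point of `C_α` has dense
forward orbit in `C_α`. -/
theorem stmt14 (α : Fin 3 → ℝ) (hα : α ∈ Delta') (Iα : Seq3) (hI : IsInfimax α Iα) :
    (∀ U ∈ nhds Iα, ∃ N : ℕ, 0 < N ∧ ∀ r : ℕ, ∃ k, r ≤ k ∧ k < r + N ∧ shift^[k] Iα ∈ U) ∧
      IsMinimalSet shift (orbitClosure Iα) ∧
      ∀ x ∈ orbitClosure Iα, orbitClosure Iα ⊆ closure {y | ∃ n : ℕ, shift^[n] x = y} := by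
  have h := infimax_rec hα hI
  have hmin := minimal_of_rec h
  refine ⟨fun U hU => ?_, ⟨?_, ?_, closure_orbit_maps _, hmin⟩, hmin⟩
  · obtain ⟨m, hm⟩ := nhds_agree hU
    obtain ⟨N, hN, hr⟩ := h m
    refine ⟨N, hN, fun r => ?_⟩
    obtain ⟨k, h1, h2, h3⟩ := hr r
    refine ⟨k, h1, h2, hm _ fun i hi => ?_⟩
    rw [shift_iter_apply]; exact h3 i hi
  · exact ⟨Iα, subset_closure ⟨0, rfl⟩⟩
  · exact isClosed_closure.isCompact
end
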